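/- arXiv:1412.7905 — 2 statements merged into one kernel-verified Lean document; each statement's English description precedes it below -/
import Mathlib

section
/- Let 0 = i_0 < i_1 < ⋯ < i_l = d and 0 = j_0 < j_1 < ⋯ < j_m = d be the block indices such that a_1 = ⋯ = a_{i_1} > a_{i_1+1} = ⋯ = a_{i_2} > ⋯ > a_{i_{l-1}+1} = ⋯ = a_{i_l} and b_1 = ⋯ = b_{j_1} > b_{j_1+1} = ⋯ = b_{j_2} > ⋯ > b_{j_{m-1}+1} = ⋯ = b_{j_m}, and let λ_i := lim_{p→∞} λ_i(p) be the limiting eigenvalues of Z_p := (A^{p/2} B^p A^{p/2})^{1/p}. Then the following are equivalent: (i) λ_i = a_i b_i for all i = 1,…,d; (ii) for every k = 1,…,d, taking r and s with i_{r-1} < k ≤ i_r and j_{s-1} < k ≤ j_s, there exist subsets I_k, J_k ⊆ {1,…,d} of cardinality k with {1,…,i_{r-1}} ⊆ I_k ⊆ {1,…,i_r}, {1,…,j_{s-1}} ⊆ J_k ⊆ {1,…,j_s}, and det (V*W)_{I_k,J_k} ≠ 0; (iii) the property in (ii) holds for every k in {i_1,…,i_{l-1}, j_1,…,j_{m-1}}.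 -/
open Matrix Filter Topology Finset
open scoped ComplexOrder

/-- Functional-calculus power of a (Hermitian, in practice positive semidefinite)
matrix, with the convention `0 ^ r = 0` for `r > 0`. -/
noncomputable def psdPow {d : ℕ} (A : Matrix (Fin d) (Fin d) ℂ) (r : ℝ) :
    Matrix (Fin d) (Fin d) ℂ :=
  if hA : A.IsHermitian then
    (hA.eigenvectorUnitary : Matrix (Fin d) (Fin d) ℂ) *
      Matrix.diagonal (fun i => ((hA.eigenvalues i ^ r : ℝ) : ℂ)) *
      star (hA.eigenvectorUnitary : Matrix (Fin d) (Fin d) ℂ)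
  else 0

/-- The eigenvalues of a Hermitian matrix, sorted in decreasing order
(with multiplicities). -/
noncomputable def eigsDesc {d : ℕ} (A : Matrix (Fin d) (Fin d) ℂ) : Fin d → ℝ :=
  if hA : A.IsHermitian then
    fun i => hA.eigenvalues (Tuple.sort hA.eigenvalues i.rev)
  else 0

/-- `Zmat A B p = (A^{p/2} B^p A^{p/2})^{1/p}`. -/
noncomputable def Zmat {d : ℕ} (A B : Matrix (Fin d) (Fin d) ℂ) (p : ℝ) :
    Matrix (Fin d) (Fin d) ℂ :=
  psdPow (psdPow A (p / 2) * psdPow B p * psdPow A (p / 2)) (1 / p)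

/-- Condition (ii) of Theorem 3.1 for the (1-based) index `k+1`: there exist index sets
`I, J` of cardinality `k+1` with
`{i : a_i > a_{k+1}} ⊆ I ⊆ {i : a_i ≥ a_{k+1}}` (these are the sets `{1,…,i_{r-1}}` and
`{1,…,i_r}` determined by the block structure of the decreasing tuple `a`), similarly for
`J` and `b`, such that `det U_{I,J} ≠ 0`. -/
def BlockMinorCond {d : ℕ} (U : Matrix (Fin d) (Fin d) ℂ) (a b : Fin d → ℝ)
    (k : Fin d) : Prop :=
  ∃ (I J : Finset (Fin d)) (hI : I.card = (k : ℕ) + 1) (hJ : J.card = (k : ℕ) + 1),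
    Finset.univ.filter (fun i => a k < a i) ⊆ I ∧
    I ⊆ Finset.univ.filter (fun i => a k ≤ a i) ∧
    Finset.univ.filter (fun i => b k < b i) ⊆ J ∧
    J ⊆ Finset.univ.filter (fun i => b k ≤ b i) ∧
    (U.submatrix (fun r : Fin ((k : ℕ) + 1) => ((I.orderIsoOfFin hI r : Fin d)))
      (fun c : Fin ((k : ℕ) + 1) => ((J.orderIsoOfFin hJ c : Fin d)))).det ≠ 0

/-!
Write `U = Vᴴ * W`. Since `Z_p ^ p` has the same characteristic polynomial as `A ^ p * B ^ p`, the
Cauchy–Binet formula gives, for every `k`,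
`∑ S, ∏ i ∈ S, λ_i(p) ^ p = ∑ I, ∑ J, (a_I * b_J) ^ p * |det U_{I,J}| ^ 2`,
with `S`, `I` and `J` running over the `k`-element index sets, `a_I = ∏ i ∈ I, a i` and
`b_J = ∏ j ∈ J, b j`. Taking `p`-th roots as `p → ∞`, the product `λ_1 ⋯ λ_k` is the largest
`a_I * b_J` over the nonvanishing minors of `U`. It is at most `∏ i ≤ k, a i * b i`, and if that
bound is positive, equality holds exactly when a nonvanishing minor sits on rows and columns
carrying the `k` largest values of `a` and of `b`. When the bound is zero, such a minor is obtained
by enlarging a smaller one, which is possible because the rows and the columns of `U` are linearly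
independent. Finally, `a i * b i` is constant between consecutive block boundaries, so that equality
at the boundaries and monotonicity force equality everywhere.
-/

section TopSets

variable {ι R : Type*}

/-- The values of `a` on `I` dominate its values off `I`: `I` carries the `#I` largest values. -/
def IsTopSet [LE R] (a : ι → R) (I : Finset ι) : Prop :=
  ∀ j ∈ I, ∀ i ∉ I, a i ≤ a j

namespace IsTopSet

variable {a : ι → R} {I J : Finset ι}

theorem empty [LE R] (a : ι → R) : IsTopSet a ∅ := fun _ hj => absurd hj (notMem_empty _)

theorem univ [Fintype ι] [LE R] (a : ι → R) : IsTopSet a univ :=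
  fun _ _ i hi => absurd (mem_univ i) hi

theorem Iic [LinearOrder ι] [LocallyFiniteOrderBot ι] [Preorder R] (ha : Antitone a) (k : ι) :
    IsTopSet a (Iic k) := fun j hj i hi => by
  rw [mem_Iic] at hj hi
  exact ha (hj.trans (not_le.1 hi).le)

theorem filter_lt_subset [Fintype ι] [LinearOrder R] (hI : IsTopSet a I) {c : R}
    (hc : #{i | c < a i} ≤ #I) : ({i | c < a i} : Finset ι) ⊆ I := by
  intro i hi
  by_contra hiI
  have hsub : I ⊆ ({i | c < a i} : Finset ι) := fun j hj =>
    (mem_filter_univ j).2 (((mem_filter_univ i).1 hi).trans_le (hI j hj i hiI))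
  exact hiI (eq_of_subset_of_card_le hsub hc ▸ hi)

theorem subset_filter_le [Fintype ι] [LinearOrder R] (hI : IsTopSet a I) {c : R}
    (hc : #I ≤ #{i | c ≤ a i}) : I ⊆ ({i | c ≤ a i} : Finset ι) := by
  intro j hj
  by_contra hjc
  have hsub : ({i | c ≤ a i} : Finset ι) ⊆ I := fun i hi => by
    by_contra hiI
    exact hjc ((mem_filter_univ j).2 (((mem_filter_univ i).1 hi).trans (hI j hj i hiI)))
  exact hjc (eq_of_subset_of_card_le hsub hc ▸ hj)

theorem of_filter_subset [Fintype ι] [LinearOrder R] {c : R}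
    (hlt : ({i | c < a i} : Finset ι) ⊆ I) (hle : I ⊆ ({i | c ≤ a i} : Finset ι)) :
    IsTopSet a I := fun j hj i hi =>
  (not_lt.1 fun h => hi (hlt ((mem_filter_univ i).2 h))).trans ((mem_filter_univ j).1 (hle hj))

theorem exists_superset [Fintype ι] [LinearOrder R] (hI : IsTopSet a I) {k : ℕ}
    (hIk : #I ≤ k) (hk : k ≤ Fintype.card ι) : ∃ J, I ⊆ J ∧ #J = k ∧ IsTopSet a J := by
  classical
  induction k, hIk using Nat.le_induction with
  | base => exact ⟨I, Subset.rfl, rfl, hI⟩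
  | succ k _ ih =>
    obtain ⟨J, hIJ, hJk, hJ⟩ := ih (by lia)
    have hne : Jᶜ.Nonempty := by
      rw [← card_pos, card_compl]
      lia
    obtain ⟨i, hi, hmax⟩ := exists_max_image Jᶜ a hne
    rw [mem_compl] at hi
    refine ⟨insert i J, hIJ.trans (subset_insert i J), by rw [card_insert_of_notMem hi, hJk], ?_⟩
    intro j hj i' hi'
    rw [mem_insert, not_or] at hi'
    rcases mem_insert.1 hj with rfl | hj
    · exact hmax i' (mem_compl.2 hi'.2)
    · exact hJ j hj i' hi'.2

theorem prod_le_prod [CommSemiring R] [PartialOrder R] [IsOrderedRing R] (hI : IsTopSet a I)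
    (ha : ∀ i, 0 ≤ a i) (hJI : #J = #I) : ∏ i ∈ J, a i ≤ ∏ i ∈ I, a i := by
  classical
  let e : ↥(J \ I) ≃ ↥(I \ J) := equivOfCardEq (card_sdiff_comm hJI)
  have hdiff : ∏ i ∈ J \ I, a i ≤ ∏ i ∈ I \ J, a i := by
    rw [← prod_coe_sort (J \ I), ← prod_coe_sort (I \ J), ← e.prod_comp]
    exact Finset.prod_le_prod (fun i _ => ha i) fun i _ =>
      hI _ (mem_sdiff.1 (e i).2).1 _ (mem_sdiff.1 i.2).2
  rw [← prod_inter_mul_prod_sdiff J I, ← prod_inter_mul_prod_sdiff I J, inter_comm I J]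
  exact mul_le_mul_of_nonneg_left hdiff (prod_nonneg fun i _ => ha i)

theorem prod_eq_prod [CommSemiring R] [PartialOrder R] [IsOrderedRing R] (hI : IsTopSet a I)
    (hJ : IsTopSet a J) (ha : ∀ i, 0 ≤ a i) (hIJ : #I = #J) : ∏ i ∈ I, a i = ∏ i ∈ J, a i :=
  (hJ.prod_le_prod ha hIJ).antisymm (hI.prod_le_prod ha hIJ.symm)

theorem of_forall_prod_le [CommSemiring R] [LinearOrder R] [IsStrictOrderedRing R]
    (ha : ∀ i, 0 ≤ a i) (hpos : 0 < ∏ i ∈ I, a i)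
    (hmax : ∀ J : Finset ι, #J = #I → ∏ i ∈ J, a i ≤ ∏ i ∈ I, a i) : IsTopSet a I := by
  classical
  intro j hj i hi
  have hi' : i ∉ I.erase j := fun h => hi (mem_of_mem_erase h)
  have hswap : (∏ l ∈ insert i (I.erase j), a l) * a j = (∏ l ∈ I, a l) * a i := by
    rw [prod_insert hi', ← prod_erase_mul I a hj]
    ring
  have hle := hmax (insert i (I.erase j))
    (by rw [card_insert_of_notMem hi', card_erase_add_one hj])
  refine le_of_mul_le_mul_left ?_ hpos
  rw [← hswap]
  exact mul_le_mul_of_nonneg_right hle (ha j)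

end IsTopSet

theorem eq_of_prod_Iic_eq [LinearOrder ι] [LocallyFiniteOrderBot ι] [WellFoundedLT ι]
    [CommRing R] [LinearOrder R] [IsStrictOrderedRing R] {x c : ι → R}
    (hx : Antitone x) (hc : Antitone c) (hx0 : ∀ i, 0 ≤ x i) (hc0 : ∀ i, 0 ≤ c i)
    (hle : ∀ k, ∏ i ∈ Iic k, x i ≤ ∏ i ∈ Iic k, c i)
    (heq : ∀ i, ∃ k, i ≤ k ∧ c k = c i ∧ ∏ j ∈ Iic k, x j = ∏ j ∈ Iic k, c j) : x = c := by
  funext i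
  induction i using WellFoundedLT.induction with
  | ind i ih =>
  have hprev : ∏ j ∈ Iio i, x j = ∏ j ∈ Iio i, c j :=
    prod_congr rfl fun j hj => ih j (mem_Iio.1 hj)
  by_cases h0 : ∏ j ∈ Iio i, c j = 0
  · obtain ⟨j, hj, hj0⟩ := prod_eq_zero_iff.1 h0
    have hji := (mem_Iio.1 hj).le
    have hxi : x i = 0 := le_antisymm ((hx hji).trans (ih j (mem_Iio.1 hj) ▸ hj0).le) (hx0 i)
    have hci : c i = 0 := le_antisymm ((hc hji).trans hj0.le) (hc0 i)
    rw [hxi, hci]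
  have hpos := (prod_nonneg fun j _ => hc0 j).lt_of_ne' h0
  apply le_antisymm
  · have h := hle i
    rw [← Iio_insert, prod_insert notMem_Iio_self, prod_insert notMem_Iio_self, hprev] at h
    exact le_of_mul_le_mul_right h hpos
  · obtain ⟨k, hik, hck, hk⟩ := heq i
    have hsub : Iio i ⊆ Iic k := fun j hj => mem_Iic.2 ((mem_Iio.1 hj).le.trans hik)
    have hmem : ∀ j ∈ Iic k \ Iio i, i ≤ j ∧ j ≤ k := fun j hj => by
      simpa [and_comm] using hj
    rw [← prod_sdiff hsub, ← prod_sdiff hsub, hprev] at hk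
    have hblock : ∏ j ∈ Iic k \ Iio i, x j = c i ^ #(Iic k \ Iio i) := by
      rw [mul_right_cancel₀ h0 hk]
      exact prod_eq_pow_card fun j hj =>
        le_antisymm (hc (hmem j hj).1) (hck ▸ hc (hmem j hj).2)
    have hxi : ∏ j ∈ Iic k \ Iio i, x j ≤ x i ^ #(Iic k \ Iio i) := by
      rw [← prod_const]
      exact prod_le_prod (fun j _ => hx0 j) fun j hj => hx (hmem j hj).1
    have hi : i ∈ Iic k \ Iio i := mem_sdiff.2 ⟨mem_Iic.2 hik, notMem_Iio_self⟩
    exact le_of_pow_le_pow_left₀ (card_ne_zero_of_mem hi) (hx0 i) (hblock ▸ hxi)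

end TopSets

section Limits

theorem tendsto_const_mul_rpow_rpow_inv {c m : ℝ} (hc : 0 < c) (hm : 0 ≤ m) :
    Tendsto (fun p : ℝ => (c * m ^ p) ^ p⁻¹) atTop (𝓝 m) := by
  have hroot : Tendsto (fun p : ℝ => c ^ p⁻¹ * m) atTop (𝓝 m) := by
    have h := (Real.continuousAt_const_rpow hc.ne' (b := 0)).tendsto.comp
      (tendsto_inv_atTop_zero (𝕜 := ℝ))
    simpa [Function.comp_def] using h.mul_const m
  refine hroot.congr' ?_
  filter_upwards [eventually_ne_atTop 0] with p hp
  rw [Real.mul_rpow hc.le (Real.rpow_nonneg hm p), Real.rpow_rpow_inv hm hp]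

theorem tendsto_of_rpow_mem_Icc {y : ℝ → ℝ} {c C m : ℝ} (hc : 0 < c) (hC : 0 < C) (hm : 0 ≤ m)
    (hy : ∀ᶠ p in atTop, 0 ≤ y p) (hyp : ∀ᶠ p in atTop, y p ^ p ∈ Set.Icc (c * m ^ p) (C * m ^ p)) :
    Tendsto y atTop (𝓝 m) := by
  refine tendsto_of_tendsto_of_tendsto_of_le_of_le' (tendsto_const_mul_rpow_rpow_inv hc hm)
    (tendsto_const_mul_rpow_rpow_inv hC hm) ?_ ?_
  all_goals
    filter_upwards [hy, hyp, eventually_gt_atTop 0] with p hy hyp hp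
    rw [← Real.rpow_rpow_inv hy hp.ne']
  · exact Real.rpow_le_rpow (by positivity) hyp.1 (inv_nonneg.2 hp.le)
  · exact Real.rpow_le_rpow (by positivity) hyp.2 (inv_nonneg.2 hp.le)

theorem isGreatest_image_of_tendsto {ι : Type*} {s : Finset ι} {x g : ι → ℝ} {y : ℝ → ℝ} {C P : ℝ}
    (hx : ∀ w ∈ s, 0 ≤ x w) (hg : ∀ w ∈ s, 0 ≤ g w) (hne : ∃ w ∈ s, g w ≠ 0) (hC : 0 < C)
    (hy : ∀ᶠ p in atTop, 0 ≤ y p)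
    (hle : ∀ᶠ p in atTop, y p ^ p ≤ ∑ w ∈ s, x w ^ p * g w)
    (hge : ∀ᶠ p in atTop, ∑ w ∈ s, x w ^ p * g w ≤ C * y p ^ p)
    (hlim : Tendsto y atTop (𝓝 P)) : IsGreatest (x '' {w | w ∈ s ∧ g w ≠ 0}) P := by
  obtain ⟨v, hv, hmax⟩ := exists_max_image {w ∈ s | g w ≠ 0} x (by simpa [Finset.Nonempty])
  simp only [mem_filter] at hv hmax
  have hgv : 0 < g v := (hg v hv.1).lt_of_ne' hv.2
  have hsum : 0 < ∑ w ∈ s, g w := hgv.trans_le (single_le_sum hg hv.1)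
  have hyv : Tendsto y atTop (𝓝 (x v)) := by
    refine tendsto_of_rpow_mem_Icc (div_pos hgv hC) hsum (hx v hv.1) hy ?_
    filter_upwards [hle, hge, eventually_ge_atTop 0] with p hle hge hp
    constructor
    · rw [div_mul_eq_mul_div, div_le_iff₀' hC, mul_comm]
      refine le_trans ?_ hge
      exact single_le_sum (f := fun w => x w ^ p * g w)
        (fun w hw => mul_nonneg (Real.rpow_nonneg (hx w hw) p) (hg w hw)) hv.1
    · rw [mul_comm, mul_sum]
      refine hle.trans (sum_le_sum fun w hw => ?_)
      rcases eq_or_ne (g w) 0 with h0 | h0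
      · simp [h0]
      · exact mul_le_mul_of_nonneg_right
          (Real.rpow_le_rpow (hx w hw) (hmax w ⟨hw, h0⟩) hp) (hg w hw)
  rw [tendsto_nhds_unique hlim hyv]
  exact ⟨⟨v, hv, rfl⟩, Set.forall_mem_image.2 hmax⟩

end Limits

section Minors

variable {m n R 𝕜 : Type*} [CommRing R] [RCLike 𝕜]

/-- The sum of the `k × k` principal minors of `M`, i.e. the `k`-th elementary symmetric function
of its eigenvalues. -/
def principalMinorSum [Fintype n] [DecidableEq n] (M : Matrix n n R) (k : ℕ) : R :=
  ∑ S ∈ powersetCard k univ, (M.submatrix (Subtype.val : S → n) Subtype.val).det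

section PrincipalMinorSum

variable [Fintype m] [DecidableEq m] [Fintype n] [DecidableEq n]

theorem principalMinorSum_mul_comm (A : Matrix m n R) (B : Matrix n m R) (k : ℕ) :
    principalMinorSum (A * B) k = principalMinorSum (B * A) k := by
  simp_rw [principalMinorSum, ← coeff_det_one_add_X_smul_eq_sum_minors, Matrix.map_mul]
  rw [← Matrix.mul_smul, det_one_add_mul_comm, Matrix.smul_mul]

theorem principalMinorSum_diagonal (x : n → R) (k : ℕ) :
    principalMinorSum (diagonal x) k = ∑ S ∈ powersetCard k univ, ∏ i ∈ S, x i := by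
  refine sum_congr rfl fun S _ => ?_
  rw [submatrix_diagonal _ _ Subtype.val_injective, det_diagonal]
  exact prod_coe_sort S x

theorem principalMinorSum_card (M : Matrix n n R) :
    principalMinorSum M (Fintype.card n) = M.det := by
  rw [principalMinorSum, ← card_univ, powersetCard_self, sum_singleton]
  exact det_submatrix_equiv_self (Equiv.subtypeUnivEquiv mem_univ) M

/-- The **Cauchy–Binet formula**. The two factors of each summand are kept in one determinant, and
in this order, so that no bijection between `J` and `m` has to be chosen. -/
theorem det_mul_eq_sum_det_submatrix_mul (A : Matrix m n R) (B : Matrix n m R) :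
    (A * B).det = ∑ J ∈ powersetCard (Fintype.card m) univ,
      (B.submatrix (Subtype.val : J → n) id * A.submatrix id Subtype.val).det := by
  rw [← principalMinorSum_card, principalMinorSum_mul_comm]
  rfl

end PrincipalMinorSum

/-- The Gram determinant of the columns of the submatrix `U_{I,J}`. For `#I = #J` it is
`|det U_{I,J}| ^ 2`, but it does not require a choice of bijection between `I` and `J`. -/
noncomputable def gramMinor [DecidableEq n] (U : Matrix m n 𝕜) (I : Finset m) (J : Finset n) : ℝ :=
  RCLike.re ((U.submatrix (Subtype.val : I → m) (Subtype.val : J → n))ᴴ *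
    U.submatrix (Subtype.val : I → m) (Subtype.val : J → n)).det

section GramMinor

variable [DecidableEq n]

theorem gramMinor_nonneg (U : Matrix m n 𝕜) (I : Finset m) (J : Finset n) :
    0 ≤ gramMinor U I J :=
  (RCLike.nonneg_iff.1 (posSemidef_conjTranspose_mul_self
    (U.submatrix (Subtype.val : I → m) (Subtype.val : J → n))).det_nonneg).1

theorem gramMinor_empty_ne_zero (U : Matrix m n 𝕜) : gramMinor U ∅ ∅ ≠ 0 := by
  simp [gramMinor]

theorem coe_gramMinor (U : Matrix m n 𝕜) (I : Finset m) (J : Finset n) :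
    (gramMinor U I J : 𝕜) = ((U.submatrix (Subtype.val : I → m) (Subtype.val : J → n))ᴴ *
      U.submatrix (Subtype.val : I → m) (Subtype.val : J → n)).det :=
  RCLike.conj_eq_iff_re.1 (RCLike.conj_eq_iff_im.2 (RCLike.nonneg_iff.1
    (posSemidef_conjTranspose_mul_self _).det_nonneg).2)

theorem gramMinor_eq_sq_norm_det {κ : Type*} [Fintype κ] [DecidableEq κ] (U : Matrix m n 𝕜)
    {I : Finset m} {J : Finset n} (e : κ ≃ I) (f : κ ≃ J) :
    gramMinor U I J = ‖(U.submatrix (fun r => (e r : m)) (fun c => (f c : n))).det‖ ^ 2 := by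
  let X := U.submatrix (Subtype.val : I → m) (Subtype.val : J → n)
  have hX : (Xᴴ * X).submatrix f f = (X.submatrix e f)ᴴ * X.submatrix e f :=
    (submatrix_mul_equiv Xᴴ X f e f).symm
  have hdet : (gramMinor U I J : 𝕜) = (X.submatrix e f)ᴴ.det * (X.submatrix e f).det := by
    rw [coe_gramMinor, ← det_submatrix_equiv_self f, hX, det_mul]
  rw [det_conjTranspose, RCLike.star_def, RCLike.conj_mul] at hdet
  exact_mod_cast hdet

theorem gramMinor_ne_zero_iff_linearIndependent (U : Matrix m n 𝕜) {I : Finset m} {J : Finset n} :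
    gramMinor U I J ≠ 0 ↔ LinearIndependent 𝕜 fun (j : J) (i : I) => U i j := by
  let X := U.submatrix (Subtype.val : I → m) (Subtype.val : J → n)
  have hdet : (gramMinor U I J : 𝕜) = (Xᴴ * X).det := coe_gramMinor U I J
  rw [← RCLike.ofReal_ne_zero (K := 𝕜), hdet, ← isUnit_iff_ne_zero, ← isUnit_iff_isUnit_det,
    ← mulVec_injective_iff_isUnit]
  change Function.Injective (Xᴴ * X).mulVecLin ↔ LinearIndependent 𝕜 X.col
  rw [← mulVec_injective_iff, ← LinearMap.ker_eq_bot, ker_mulVecLin_conjTranspose_mul_self,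
    LinearMap.ker_eq_bot]
  rfl

theorem gramMinor_transpose [DecidableEq m] (U : Matrix m n 𝕜) {I : Finset m} {J : Finset n}
    (h : #I = #J) : gramMinor Uᵀ J I = gramMinor U I J := by
  rw [gramMinor_eq_sq_norm_det U (Equiv.refl I) (equivOfCardEq h),
    gramMinor_eq_sq_norm_det Uᵀ (equivOfCardEq h) (Equiv.refl I), ← det_transpose]
  rfl

theorem principalMinorSum_diagonal_mul_mul_conjTranspose [Fintype m] [DecidableEq m] [Fintype n]
    (U : Matrix m n 𝕜) (x : m → 𝕜) (y : n → 𝕜) (k : ℕ) :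
    principalMinorSum (diagonal x * (U * diagonal y * Uᴴ)) k =
      ∑ I ∈ powersetCard k univ, ∑ J ∈ powersetCard k univ,
        (∏ i ∈ I, x i) * (∏ j ∈ J, y j) * gramMinor U I J := by
  refine sum_congr rfl fun I hI => ?_
  have hrows : (diagonal x * (U * diagonal y * Uᴴ)).submatrix (Subtype.val : I → m) Subtype.val =
      diagonal (fun i : I => x i) *
        (U.submatrix Subtype.val id * (diagonal y * Uᴴ).submatrix id Subtype.val) := by
    ext i j
    simp only [submatrix_apply, diagonal_mul, Matrix.mul_assoc]
    rfl
  have hcols (J : Finset n) : ((diagonal y * Uᴴ).submatrix id (Subtype.val : I → m)).submatrix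
      (Subtype.val : J → n) id =
        diagonal (fun j : J => y j) *
          (U.submatrix (Subtype.val : I → m) (Subtype.val : J → n))ᴴ := by
    ext
    simp [diagonal_mul]
  rw [hrows, det_mul, det_diagonal, det_mul_eq_sum_det_submatrix_mul, mul_sum, Fintype.card_coe,
    mem_powersetCard_univ.1 hI]
  refine sum_congr rfl fun J _ => ?_
  rw [hcols, Matrix.mul_assoc, det_mul, det_diagonal, coe_gramMinor, prod_coe_sort I x,
    prod_coe_sort J y, mul_assoc]
  rfl

end GramMinor

theorem exists_superset_linearIndepOn {ι K E : Type*} [Finite ι] [DivisionRing K]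
    [AddCommGroup E] [Module K E] {v : ι → E} (hspan : Submodule.span K (Set.range v) = ⊤)
    {s : Finset ι} (hs : LinearIndepOn K v (s : Set ι)) :
    ∃ t : Finset ι, s ⊆ t ∧ #t = Module.finrank K E ∧ LinearIndepOn K v (t : Set ι) := by
  obtain ⟨t, -, hst, ht, hli⟩ := exists_linearIndepOn_extension hs (Set.subset_univ _)
  lift t to Finset ι using t.toFinite
  have htop : ⊤ ≤ Submodule.span K (Set.range fun i : (t : Set ι) => v i) := by
    rw [← hspan, ← Set.image_eq_range, ← Set.image_univ]
    exact Submodule.span_le.2 ht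
  refine ⟨t, coe_subset.1 hst, ?_, hli⟩
  rw [Module.finrank_eq_card_basis (Module.Basis.mk hli htop)]
  exact (Fintype.card_coe t).symm

theorem exists_superset_gramMinor_ne_zero [Fintype n] [DecidableEq m] [DecidableEq n]
    {U : Matrix m n 𝕜} (hU : U * Uᴴ = 1) {I₀ I : Finset m} {J₀ : Finset n} (hI : I₀ ⊆ I)
    (h : gramMinor U I₀ J₀ ≠ 0) :
    ∃ J, J₀ ⊆ J ∧ #J = #I ∧ gramMinor U I J ≠ 0 := by
  let X := U.submatrix (Subtype.val : I → m) id
  have hX : X * Xᴴ = 1 := by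
    change (U * Uᴴ).submatrix (Subtype.val : I → m) Subtype.val = 1
    rw [hU, submatrix_one _ Subtype.val_injective]
  have hspan : Submodule.span 𝕜 (Set.range X.col) = ⊤ := by
    rw [← range_mulVecLin, LinearMap.range_eq_top]
    exact fun w => ⟨Xᴴ *ᵥ w, by simp [hX]⟩
  have hli : LinearIndepOn 𝕜 X.col (J₀ : Set n) :=
    LinearIndependent.of_comp (LinearMap.funLeft 𝕜 𝕜 (Set.inclusion hI))
      ((gramMinor_ne_zero_iff_linearIndependent U).1 h)
  obtain ⟨J, hJ₀J, hJ, hJli⟩ := exists_superset_linearIndepOn hspan hli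
  exact ⟨J, hJ₀J, by simpa using hJ, (gramMinor_ne_zero_iff_linearIndependent U).2 hJli⟩

theorem exists_gramMinor_ne_zero [Fintype n] [DecidableEq m] [DecidableEq n] {U : Matrix m n 𝕜}
    (hU : U * Uᴴ = 1) (I : Finset m) : ∃ J, #J = #I ∧ gramMinor U I J ≠ 0 :=
  let ⟨J, _, hJ⟩ :=
    exists_superset_gramMinor_ne_zero hU (empty_subset I) (gramMinor_empty_ne_zero U)
  ⟨J, hJ⟩

end Minors

section ConjDiagonal

variable {m n : Type*} [Fintype n] [DecidableEq n]

/-- `V * diag x * Vᴴ` for a real vector `x`: for unitary `V`, the Hermitian matrix with eigenvalues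
`x` and the columns of `V` as eigenvectors. -/
def conjDiagonal (V : Matrix m n ℂ) (x : n → ℝ) : Matrix m m ℂ :=
  V * diagonal (fun i => (x i : ℂ)) * Vᴴ

theorem posSemidef_conjDiagonal [Finite m] (V : Matrix m n ℂ) {x : n → ℝ} (hx : ∀ i, 0 ≤ x i) :
    (conjDiagonal V x).PosSemidef :=
  (PosSemidef.diagonal fun i => Complex.zero_le_real.2 (hx i)).mul_mul_conjTranspose_same V

theorem isHermitian_conjDiagonal (V : Matrix m n ℂ) (x : n → ℝ) :
    (conjDiagonal V x).IsHermitian :=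
  isHermitian_mul_mul_conjTranspose V
    (isHermitian_diagonal_iff.2 fun i => Complex.conj_ofReal (x i))

theorem eq_conjDiagonal_eigenvalues {A : Matrix n n ℂ} (hA : A.IsHermitian) :
    A = conjDiagonal hA.eigenvectorUnitary hA.eigenvalues :=
  hA.spectral_theorem.trans (Unitary.conjStarAlgAut_apply _ _)

theorem conjDiagonal_mul_conjDiagonal {V : Matrix n n ℂ} (hV : V ∈ unitaryGroup n ℂ)
    (x y : n → ℝ) :
    conjDiagonal V x * conjDiagonal V y = conjDiagonal V fun i => x i * y i := by
  have hVV : Vᴴ * V = 1 := mem_unitaryGroup_iff'.1 hV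
  simp only [conjDiagonal, Complex.ofReal_mul, ← diagonal_mul_diagonal]
  rw [Matrix.mul_assoc _ Vᴴ, ← Matrix.mul_assoc Vᴴ, ← Matrix.mul_assoc Vᴴ, hVV, Matrix.one_mul]
  simp only [Matrix.mul_assoc]

theorem mul_diagonal_comp_of_mul_diagonal [Fintype m] [DecidableEq m] {M : Matrix m n ℂ}
    {x : n → ℝ} {y : m → ℝ} (f : ℝ → ℝ)
    (h : M * diagonal (fun j => (x j : ℂ)) = diagonal (fun i => (y i : ℂ)) * M) :
    M * diagonal (fun j => (f (x j) : ℂ)) = diagonal (fun i => (f (y i) : ℂ)) * M := by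
  ext i j
  have hij := congrFun (congrFun h i) j
  rw [mul_diagonal, diagonal_mul, mul_comm] at hij ⊢
  rcases eq_or_ne (M i j) 0 with h0 | h0
  · simp [h0]
  · rw [Complex.ofReal_inj.1 (mul_right_cancel₀ h0 hij)]

theorem conjDiagonal_comp_congr {V Q : Matrix n n ℂ} (hV : V ∈ unitaryGroup n ℂ)
    (hQ : Q ∈ unitaryGroup n ℂ) {x y : n → ℝ} (h : conjDiagonal V x = conjDiagonal Q y)
    (f : ℝ → ℝ) : conjDiagonal V (fun i => f (x i)) = conjDiagonal Q fun i => f (y i) := by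
  have hVV : Vᴴ * V = 1 := mem_unitaryGroup_iff'.1 hV
  have hVV' : V * Vᴴ = 1 := mem_unitaryGroup_iff.1 hV
  have hQQ : Qᴴ * Q = 1 := mem_unitaryGroup_iff'.1 hQ
  have hQQ' : Q * Qᴴ = 1 := mem_unitaryGroup_iff.1 hQ
  have hintertwine : Qᴴ * V * diagonal (fun i => (x i : ℂ)) =
      diagonal (fun i => (y i : ℂ)) * (Qᴴ * V) := by
    calc Qᴴ * V * diagonal (fun i => (x i : ℂ)) = Qᴴ * conjDiagonal V x * V := by
          simp only [conjDiagonal, Matrix.mul_assoc, hVV, Matrix.mul_one]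
      _ = Qᴴ * Q * (diagonal (fun i => (y i : ℂ)) * (Qᴴ * V)) := by
          rw [h]
          simp only [conjDiagonal, Matrix.mul_assoc]
      _ = diagonal (fun i => (y i : ℂ)) * (Qᴴ * V) := by rw [hQQ, Matrix.one_mul]
  calc conjDiagonal V (fun i => f (x i))
      = Q * (Qᴴ * V * diagonal (fun i => (f (x i) : ℂ))) * Vᴴ := by
        rw [Matrix.mul_assoc Qᴴ, ← Matrix.mul_assoc Q, hQQ', Matrix.one_mul]
        rfl
    _ = conjDiagonal Q (fun i => f (y i)) * (V * Vᴴ) := by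
        rw [mul_diagonal_comp_of_mul_diagonal f hintertwine]
        simp only [conjDiagonal, Matrix.mul_assoc]
    _ = conjDiagonal Q fun i => f (y i) := by rw [hVV', Matrix.mul_one]

theorem principalMinorSum_conjDiagonal {V : Matrix n n ℂ} (hV : V ∈ unitaryGroup n ℂ)
    (x : n → ℝ) (k : ℕ) :
    principalMinorSum (conjDiagonal V x) k =
      ((∑ S ∈ powersetCard k univ, ∏ i ∈ S, x i : ℝ) : ℂ) := by
  have hVV : Vᴴ * V = 1 := mem_unitaryGroup_iff'.1 hV
  rw [conjDiagonal, principalMinorSum_mul_comm, ← Matrix.mul_assoc, hVV, Matrix.one_mul,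
    principalMinorSum_diagonal]
  push_cast
  rfl

theorem principalMinorSum_conjDiagonal_mul_conjDiagonal {l : Type*} [Fintype l] [DecidableEq l]
    [Fintype m] [DecidableEq m] (V : Matrix l m ℂ) (W : Matrix l n ℂ) (x : m → ℝ) (y : n → ℝ)
    (k : ℕ) :
    principalMinorSum (conjDiagonal V x * conjDiagonal W y) k =
      ((∑ w ∈ powersetCard k univ ×ˢ powersetCard k univ,
        (∏ i ∈ w.1, x i) * (∏ j ∈ w.2, y j) * gramMinor (Vᴴ * W) w.1 w.2 : ℝ) : ℂ) := by
  have hassoc : conjDiagonal V x * conjDiagonal W y =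
      V * (diagonal (fun i => (x i : ℂ)) * (Vᴴ * W * diagonal (fun j => (y j : ℂ)) * Wᴴ)) := by
    simp only [conjDiagonal, Matrix.mul_assoc]
  have hcycle : diagonal (fun i => (x i : ℂ)) *
      (Vᴴ * W * diagonal (fun j => (y j : ℂ)) * Wᴴ) * V =
      diagonal (fun i => (x i : ℂ)) *
        (Vᴴ * W * diagonal (fun j => (y j : ℂ)) * (Vᴴ * W)ᴴ) := by
    simp only [conjTranspose_mul, conjTranspose_conjTranspose, Matrix.mul_assoc]
  rw [hassoc, principalMinorSum_mul_comm, hcycle,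
    principalMinorSum_diagonal_mul_mul_conjTranspose, sum_product]
  push_cast
  rfl

end ConjDiagonal

theorem sum_powersetCard_prod_comp_perm {n R : Type*} [Fintype n] [CommSemiring R]
    (σ : Equiv.Perm n) (x : n → R) (k : ℕ) :
    ∑ S ∈ powersetCard k univ, ∏ i ∈ S, x (σ i) = ∑ S ∈ powersetCard k univ, ∏ i ∈ S, x i := by
  have hmap : univ.val.map (fun i => x (σ i)) = univ.val.map x := by
    conv_rhs => rw [← Multiset.map_univ_val_equiv σ, Multiset.map_map]
    rfl
  rw [← esymm_map_val, hmap, esymm_map_val]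

section Eigenvalues

variable {d : ℕ} {A B V W : Matrix (Fin d) (Fin d) ℂ} {a b : Fin d → ℝ}

theorem psdPow_conjDiagonal (hV : V ∈ unitaryGroup (Fin d) ℂ) (x : Fin d → ℝ) (r : ℝ) :
    psdPow (conjDiagonal V x) r = conjDiagonal V fun i => x i ^ r := by
  have hA := isHermitian_conjDiagonal V x
  rw [psdPow, dif_pos hA]
  exact conjDiagonal_comp_congr hA.eigenvectorUnitary.2 hV (eq_conjDiagonal_eigenvalues hA).symm
    fun t => t ^ r

theorem psdPow_eq_conjDiagonal (hA : A.IsHermitian) (r : ℝ) :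
    psdPow A r = conjDiagonal hA.eigenvectorUnitary fun i => hA.eigenvalues i ^ r :=
  dif_pos hA

theorem posSemidef_psdPow (hA : A.PosSemidef) (r : ℝ) : (psdPow A r).PosSemidef := by
  rw [psdPow_eq_conjDiagonal hA.isHermitian]
  exact posSemidef_conjDiagonal _ fun i => Real.rpow_nonneg (hA.eigenvalues_nonneg i) r

theorem psdPow_psdPow_inv (hA : A.PosSemidef) {p : ℝ} (hp : p ≠ 0) :
    psdPow (psdPow A p⁻¹) p = A := by
  rw [psdPow_eq_conjDiagonal hA.isHermitian, psdPow_conjDiagonal (Subtype.prop _)]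
  simp_rw [Real.rpow_inv_rpow (hA.eigenvalues_nonneg _) hp]
  exact (eq_conjDiagonal_eigenvalues hA.isHermitian).symm

theorem psdPow_mul_psdPow (hA : A.PosSemidef) {r s : ℝ} (hr : 0 ≤ r) (hs : 0 ≤ s) :
    psdPow A r * psdPow A s = psdPow A (r + s) := by
  simp_rw [psdPow_eq_conjDiagonal hA.isHermitian]
  rw [conjDiagonal_mul_conjDiagonal (Subtype.prop _)]
  simp_rw [Real.rpow_add_of_nonneg (hA.eigenvalues_nonneg _) hr hs]

theorem eigsDesc_antitone (A : Matrix (Fin d) (Fin d) ℂ) : Antitone (eigsDesc A) := by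
  unfold eigsDesc
  split_ifs with hA
  · exact fun i j hij => Tuple.monotone_sort hA.eigenvalues (Fin.rev_le_rev.2 hij)
  · exact antitone_const

theorem eigsDesc_nonneg (hA : A.PosSemidef) (i : Fin d) : 0 ≤ eigsDesc A i := by
  rw [eigsDesc, dif_pos hA.isHermitian]
  exact hA.eigenvalues_nonneg _

theorem principalMinorSum_psdPow (hA : A.IsHermitian) (r : ℝ) (k : ℕ) :
    principalMinorSum (psdPow A r) k =
      ((∑ S ∈ powersetCard k univ, ∏ i ∈ S, eigsDesc A i ^ r : ℝ) : ℂ) := by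
  rw [psdPow_eq_conjDiagonal hA, principalMinorSum_conjDiagonal (Subtype.prop _),
    ← sum_powersetCard_prod_comp_perm (Fin.revPerm.trans (Tuple.sort hA.eigenvalues)),
    eigsDesc, dif_pos hA]
  rfl

theorem posSemidef_psdPow_mul_psdPow_mul_psdPow (hA : A.PosSemidef) (hB : B.PosSemidef)
    (r s : ℝ) : (psdPow A r * psdPow B s * psdPow A r).PosSemidef := by
  have h := (posSemidef_psdPow hB s).mul_mul_conjTranspose_same (psdPow A r)
  rwa [(posSemidef_psdPow hA r).isHermitian.eq] at h

theorem posSemidef_Zmat (hA : A.PosSemidef) (hB : B.PosSemidef) (p : ℝ) :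
    (Zmat A B p).PosSemidef :=
  posSemidef_psdPow (posSemidef_psdPow_mul_psdPow_mul_psdPow hA hB _ _) _

theorem principalMinorSum_psdPow_Zmat (hA : A.PosSemidef) (hB : B.PosSemidef) {p : ℝ} (hp : 0 < p)
    (k : ℕ) :
    principalMinorSum (psdPow (Zmat A B p) p) k =
      principalMinorSum (psdPow A p * psdPow B p) k := by
  rw [Zmat, one_div,
    psdPow_psdPow_inv (posSemidef_psdPow_mul_psdPow_mul_psdPow hA hB _ _) hp.ne',
    principalMinorSum_mul_comm, ← Matrix.mul_assoc,
    psdPow_mul_psdPow hA (half_pos hp).le (half_pos hp).le, add_halves]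

theorem sum_prod_eigsDesc_Zmat_rpow (hV : V ∈ unitaryGroup (Fin d) ℂ)
    (hW : W ∈ unitaryGroup (Fin d) ℂ) (ha : ∀ i, 0 ≤ a i) (hb : ∀ i, 0 ≤ b i) {p : ℝ} (hp : 0 < p)
    (k : ℕ) :
    ∑ S ∈ powersetCard k univ,
        ∏ i ∈ S, eigsDesc (Zmat (conjDiagonal V a) (conjDiagonal W b) p) i ^ p =
      ∑ w ∈ powersetCard k univ ×ˢ powersetCard k univ,
        ((∏ i ∈ w.1, a i) * ∏ j ∈ w.2, b j) ^ p * gramMinor (Vᴴ * W) w.1 w.2 := by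
  have hA := posSemidef_conjDiagonal V ha
  have hB := posSemidef_conjDiagonal W hb
  refine Complex.ofReal_injective ?_
  rw [← principalMinorSum_psdPow (posSemidef_Zmat hA hB p).isHermitian,
    principalMinorSum_psdPow_Zmat hA hB hp, psdPow_conjDiagonal hV, psdPow_conjDiagonal hW,
    principalMinorSum_conjDiagonal_mul_conjDiagonal]
  congr! 3 with w
  rw [Real.mul_rpow (prod_nonneg fun i _ => ha i) (prod_nonneg fun j _ => hb j),
    Real.finsetProd_rpow _ _ fun i _ => ha i, Real.finsetProd_rpow _ _ fun j _ => hb j]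

end Eigenvalues

section TopMinors

variable {m n 𝕜 : Type*} [DecidableEq n] [RCLike 𝕜] {U : Matrix m n 𝕜} {a : m → ℝ} {b : n → ℝ}
  {k k₀ : ℕ}

/-- The products `a_I b_J = ∏ i ∈ I, a i * ∏ j ∈ J, b j` over all `k`-element sets `I` and `J` with
a nonvanishing minor `det U_{I,J}`. -/
def nonzeroMinorProds (U : Matrix m n 𝕜) (a : m → ℝ) (b : n → ℝ) (k : ℕ) : Set ℝ :=
  (fun w : Finset m × Finset n => (∏ i ∈ w.1, a i) * ∏ j ∈ w.2, b j) ''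
    {w | #w.1 = k ∧ #w.2 = k ∧ gramMinor U w.1 w.2 ≠ 0}

/-- Some `k × k` minor of `U` is nonzero whose rows carry the `k` largest values of `a` and whose
columns carry the `k` largest values of `b`. -/
def HasTopMinor (U : Matrix m n 𝕜) (a : m → ℝ) (b : n → ℝ) (k : ℕ) : Prop :=
  ∃ I J, #I = k ∧ #J = k ∧ IsTopSet a I ∧ IsTopSet b J ∧ gramMinor U I J ≠ 0

theorem HasTopMinor.zero (U : Matrix m n 𝕜) (a : m → ℝ) (b : n → ℝ) : HasTopMinor U a b 0 :=
  ⟨∅, ∅, rfl, rfl, .empty a, .empty b, gramMinor_empty_ne_zero U⟩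

theorem HasTopMinor.transpose [DecidableEq m] (h : HasTopMinor U a b k) :
    HasTopMinor Uᵀ b a k :=
  let ⟨I, J, hI, hJ, hIa, hJb, hIJ⟩ := h
  ⟨J, I, hJ, hI, hJb, hIa, by rwa [gramMinor_transpose U (hI.trans hJ.symm)]⟩

/-- Once all positive values of `b` are used up, any further columns may be chosen, so the rows can
be enlarged at will. -/
theorem HasTopMinor.mono_of_card_pos_right_le [Fintype m] [DecidableEq m] [Fintype n]
    (h : HasTopMinor U a b k₀) (hU : U * Uᴴ = 1) (hb : ∀ j, 0 ≤ b j) (hpos : #{j | 0 < b j} ≤ k₀)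
    (hk : k₀ ≤ k) (hkm : k ≤ Fintype.card m) : HasTopMinor U a b k := by
  obtain ⟨I₀, J₀, rfl, hJ₀, hI₀a, hJ₀b, h₀⟩ := h
  obtain ⟨I, hI₀I, rfl, hIa⟩ := hI₀a.exists_superset hk hkm
  obtain ⟨J, hJ₀J, hJI, hIJ⟩ := exists_superset_gramMinor_ne_zero hU hI₀I h₀
  have hposJ : ({j | 0 < b j} : Finset n) ⊆ J :=
    (hJ₀b.filter_lt_subset (hJ₀ ▸ hpos)).trans hJ₀J
  exact ⟨I, J, rfl, hJI, hIa,
    .of_filter_subset hposJ fun j _ => (mem_filter_univ j).2 (hb j), hIJ⟩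

theorem HasTopMinor.mono_of_card_pos_left_le [Fintype m] [Fintype n]
    (h : HasTopMinor U a b k₀) (hU : Uᴴ * U = 1) (ha : ∀ i, 0 ≤ a i) (hpos : #{i | 0 < a i} ≤ k₀)
    (hk : k₀ ≤ k) (hkn : k ≤ Fintype.card n) : HasTopMinor U a b k := by
  classical
  have hUt : Uᵀ * Uᵀᴴ = 1 := by
    change Uᵀ * Uᴴᵀ = 1
    rw [← transpose_mul, hU, transpose_one]
  exact (h.transpose.mono_of_card_pos_right_le hUt ha hpos hk hkn).transpose

theorem hasTopMinor_card [Fintype n] {U : Matrix n n 𝕜} (hU : U * Uᴴ = 1) (a b : n → ℝ) :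
    HasTopMinor U a b (Fintype.card n) := by
  obtain ⟨J, hJ, hne⟩ := exists_gramMinor_ne_zero hU univ
  obtain rfl := (card_eq_iff_eq_univ J).1 hJ
  exact ⟨univ, univ, rfl, rfl, .univ a, .univ b, hne⟩

section Extremal

variable {T : Finset m} {T' : Finset n}

theorem le_prod_mul_prod_of_mem_nonzeroMinorProds (ha : ∀ i, 0 ≤ a i) (hb : ∀ j, 0 ≤ b j)
    (hT : IsTopSet a T) (hT' : IsTopSet b T') (hTk : #T = k) (hTk' : #T' = k) {P : ℝ}
    (hP : P ∈ nonzeroMinorProds U a b k) : P ≤ (∏ i ∈ T, a i) * ∏ j ∈ T', b j := by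
  obtain ⟨⟨I, J⟩, ⟨hI, hJ, -⟩, rfl⟩ := hP
  exact mul_le_mul (hT.prod_le_prod ha (hI.trans hTk.symm))
    (hT'.prod_le_prod hb (hJ.trans hTk'.symm)) (prod_nonneg fun j _ => hb j)
    (prod_nonneg fun i _ => ha i)

theorem HasTopMinor.prod_mul_prod_mem (h : HasTopMinor U a b k) (ha : ∀ i, 0 ≤ a i)
    (hb : ∀ j, 0 ≤ b j) (hT : IsTopSet a T) (hT' : IsTopSet b T') (hTk : #T = k) (hTk' : #T' = k) :
    (∏ i ∈ T, a i) * ∏ j ∈ T', b j ∈ nonzeroMinorProds U a b k := by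
  obtain ⟨I, J, hI, hJ, hIa, hJb, hIJ⟩ := h
  rw [hT.prod_eq_prod hIa ha (hTk.trans hI.symm), hT'.prod_eq_prod hJb hb (hTk'.trans hJ.symm)]
  exact ⟨(I, J), ⟨hI, hJ, hIJ⟩, rfl⟩

theorem hasTopMinor_of_prod_mul_prod_mem (ha : ∀ i, 0 ≤ a i) (hb : ∀ j, 0 ≤ b j)
    (hT : IsTopSet a T) (hT' : IsTopSet b T') (hTk : #T = k) (hTk' : #T' = k)
    (hpos : 0 < (∏ i ∈ T, a i) * ∏ j ∈ T', b j)
    (hmem : (∏ i ∈ T, a i) * ∏ j ∈ T', b j ∈ nonzeroMinorProds U a b k) : HasTopMinor U a b k := by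
  obtain ⟨⟨I, J⟩, ⟨hI, hJ, hIJ⟩, hprod⟩ := hmem
  have hle_a {I : Finset m} (hI : #I = k) := hT.prod_le_prod ha (hI.trans hTk.symm)
  have hle_b {J : Finset n} (hJ : #J = k) := hT'.prod_le_prod hb (hJ.trans hTk'.symm)
  have hpos_I : 0 < ∏ i ∈ I, a i :=
    pos_of_mul_pos_left (hprod ▸ hpos) (prod_nonneg fun j _ => hb j)
  have hpos_J : 0 < ∏ j ∈ J, b j :=
    pos_of_mul_pos_right (hprod ▸ hpos) (prod_nonneg fun i _ => ha i)
  obtain ⟨hIT, hJT⟩ := (mul_eq_mul_iff_eq_and_eq_of_pos (hle_a hI) (hle_b hJ) hpos_I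
    (hpos_J.trans_le (hle_b hJ))).1 hprod
  exact ⟨I, J, hI, hJ, .of_forall_prod_le ha hpos_I fun I' hI' => hIT ▸ hle_a (hI'.trans hI),
    .of_forall_prod_le hb hpos_J fun J' hJ' => hJT ▸ hle_b (hJ'.trans hJ), hIJ⟩

end Extremal

end TopMinors

section Sequences

variable {d : ℕ} {U : Matrix (Fin d) (Fin d) ℂ} {a b : Fin d → ℝ}

theorem blockMinorCond_iff_hasTopMinor (ha : Antitone a) (hb : Antitone b) (k : Fin d) :
    BlockMinorCond U a b k ↔ HasTopMinor U a b (k + 1) := by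
  have hlt {x : Fin d → ℝ} (hx : Antitone x) : #{i | x k < x i} ≤ (k : ℕ) + 1 := by
    rw [← Fin.card_Iic]
    exact card_le_card fun i hi => mem_Iic.2 (hx.reflect_lt ((mem_filter_univ i).1 hi)).le
  have hle {x : Fin d → ℝ} (hx : Antitone x) : (k : ℕ) + 1 ≤ #{i | x k ≤ x i} := by
    rw [← Fin.card_Iic]
    exact card_le_card fun i hi => (mem_filter_univ i).2 (hx (mem_Iic.1 hi))
  have hdet (I J : Finset (Fin d)) (hI : #I = (k : ℕ) + 1) (hJ : #J = (k : ℕ) + 1) :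
      (U.submatrix (fun r => (I.orderIsoOfFin hI r : Fin d))
        (fun c => (J.orderIsoOfFin hJ c : Fin d))).det ≠ 0 ↔ gramMinor U I J ≠ 0 := by
    rw [gramMinor_eq_sq_norm_det U (I.orderIsoOfFin hI).toEquiv (J.orderIsoOfFin hJ).toEquiv,
      pow_ne_zero_iff two_ne_zero, norm_ne_zero_iff]
    rfl
  constructor
  · rintro ⟨I, J, hI, hJ, hIlt, hIle, hJlt, hJle, hIJ⟩
    exact ⟨I, J, hI, hJ, .of_filter_subset hIlt hIle, .of_filter_subset hJlt hJle,
      (hdet I J hI hJ).1 hIJ⟩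
  · rintro ⟨I, J, hI, hJ, hIa, hJb, hIJ⟩
    exact ⟨I, J, hI, hJ, hIa.filter_lt_subset (hI ▸ hlt ha), hIa.subset_filter_le (hI ▸ hle ha),
      hJb.filter_lt_subset (hJ ▸ hlt hb), hJb.subset_filter_le (hJ ▸ hle hb),
      (hdet I J hI hJ).2 hIJ⟩

theorem card_filter_pos_le {x : Fin d → ℝ} (hx : Antitone x) {k : Fin d} (hk : x k ≤ 0) :
    #{i | 0 < x i} ≤ (k : ℕ) := by
  rw [← Fin.card_Iio]
  exact card_le_card fun i hi =>
    mem_Iio.2 (hx.reflect_lt (hk.trans_lt ((mem_filter_univ i).1 hi)))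

theorem hasTopMinor_of_forall_prod_mul_prod_mem (hU : U ∈ unitaryGroup (Fin d) ℂ)
    (ha : Antitone a) (hb : Antitone b) (ha0 : ∀ i, 0 ≤ a i) (hb0 : ∀ i, 0 ≤ b i)
    (h : ∀ k : Fin d,
      (∏ i ∈ Iic k, a i) * ∏ i ∈ Iic k, b i ∈ nonzeroMinorProds U a b (k + 1))
    {k : ℕ} (hk : k ≤ d) : HasTopMinor U a b k := by
  induction k with
  | zero => exact .zero U a b
  | succ k ih =>
    have hprev := ih (by lia)
    let K : Fin d := ⟨k, hk⟩
    have hcard : k + 1 ≤ Fintype.card (Fin d) := hk.trans_eq (Fintype.card_fin d).symm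
    rcases (ha0 K).eq_or_lt with haK | haK
    · exact hprev.mono_of_card_pos_left_le (mem_unitaryGroup_iff'.1 hU) ha0
        (card_filter_pos_le (k := K) ha haK.ge) k.le_succ hcard
    rcases (hb0 K).eq_or_lt with hbK | hbK
    · exact hprev.mono_of_card_pos_right_le (mem_unitaryGroup_iff.1 hU) hb0
        (card_filter_pos_le (k := K) hb hbK.ge) k.le_succ hcard
    have hpos {x : Fin d → ℝ} (hx : Antitone x) (hxK : 0 < x K) : 0 < ∏ i ∈ Iic K, x i :=
      prod_pos fun i hi => hxK.trans_le (hx (mem_Iic.1 hi))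
    exact hasTopMinor_of_prod_mul_prod_mem ha0 hb0 (.Iic ha K) (.Iic hb K) (Fin.card_Iic K)
      (Fin.card_Iic K) (mul_pos (hpos ha haK) (hpos hb hbK)) (h K)

theorem exists_ge_hasTopMinor (hU : U * Uᴴ = 1) (ha : Antitone a) (hb : Antitone b)
    (htop : ∀ k : Fin d, ∀ h : (k : ℕ) + 1 < d,
      (a ⟨(k : ℕ) + 1, h⟩ < a k ∨ b ⟨(k : ℕ) + 1, h⟩ < b k) → HasTopMinor U a b (k + 1))
    (i : Fin d) : ∃ k, i ≤ k ∧ a k = a i ∧ b k = b i ∧ HasTopMinor U a b (k + 1) := by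
  obtain ⟨k, ⟨hik, hka, hkb⟩, hkmax⟩ :=
    (Set.toFinite {k | i ≤ k ∧ a k = a i ∧ b k = b i}).exists_maximal ⟨i, le_rfl, rfl, rfl⟩
  refine ⟨k, hik, hka, hkb, ?_⟩
  rcases Nat.lt_or_ge (k + 1) d with h | h
  · refine htop k h ?_
    by_contra! hle
    have hlt : k < ⟨k + 1, h⟩ := Fin.lt_def.2 k.val.lt_succ_self
    exact hlt.not_ge (hkmax ⟨hik.trans hlt.le, ((ha hlt.le).antisymm hle.1).trans hka,
      ((hb hlt.le).antisymm hle.2).trans hkb⟩ hlt.le)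
  · have hkd : (k : ℕ) + 1 = Fintype.card (Fin d) := by
      rw [Fintype.card_fin]
      exact le_antisymm k.isLt h
    exact hkd ▸ hasTopMinor_card hU a b

theorem eq_mul_of_hasTopMinor_of_lt (hU : U * Uᴴ = 1) (ha : Antitone a) (hb : Antitone b)
    (ha0 : ∀ i, 0 ≤ a i) (hb0 : ∀ i, 0 ≤ b i) {lam : Fin d → ℝ} (hlam : Antitone lam)
    (hlam0 : ∀ i, 0 ≤ lam i)
    (hmax : ∀ k : Fin d, IsGreatest (nonzeroMinorProds U a b (k + 1)) (∏ i ∈ Iic k, lam i))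
    (htop : ∀ k : Fin d, ∀ h : (k : ℕ) + 1 < d,
      (a ⟨(k : ℕ) + 1, h⟩ < a k ∨ b ⟨(k : ℕ) + 1, h⟩ < b k) → HasTopMinor U a b (k + 1)) :
    lam = fun i => a i * b i := by
  have hab : Antitone fun i => a i * b i := fun i j hij =>
    mul_le_mul (ha hij) (hb hij) (hb0 j) (ha0 i)
  have hprod_le (k : Fin d) : ∏ i ∈ Iic k, lam i ≤ ∏ i ∈ Iic k, a i * b i := by
    rw [prod_mul_distrib]
    exact le_prod_mul_prod_of_mem_nonzeroMinorProds ha0 hb0 (.Iic ha k) (.Iic hb k)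
      (Fin.card_Iic k) (Fin.card_Iic k) (hmax k).1
  have hprod_eq {k : Fin d} (h : HasTopMinor U a b (k + 1)) :
      ∏ i ∈ Iic k, lam i = ∏ i ∈ Iic k, a i * b i := by
    refine (hprod_le k).antisymm ?_
    rw [prod_mul_distrib]
    exact (hmax k).2 (h.prod_mul_prod_mem ha0 hb0 (.Iic ha k) (.Iic hb k)
      (Fin.card_Iic k) (Fin.card_Iic k))
  refine eq_of_prod_Iic_eq hlam hab hlam0 (fun i => mul_nonneg (ha0 i) (hb0 i)) hprod_le fun i => ?_
  obtain ⟨k, hik, hka, hkb, htop_k⟩ := exists_ge_hasTopMinor hU ha hb htop i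
  exact ⟨k, hik, by rw [hka, hkb], hprod_eq htop_k⟩

theorem isGreatest_prod_Iic_of_tendsto {V W : Matrix (Fin d) (Fin d) ℂ}
    (hV : V ∈ unitaryGroup (Fin d) ℂ) (hW : W ∈ unitaryGroup (Fin d) ℂ) (ha : ∀ i, 0 ≤ a i)
    (hb : ∀ i, 0 ≤ b i) {lam : Fin d → ℝ}
    (hlam : ∀ i, Tendsto (fun p : ℝ => eigsDesc (Zmat (conjDiagonal V a) (conjDiagonal W b) p) i)
      atTop (𝓝 (lam i))) (k : Fin d) :
    IsGreatest (nonzeroMinorProds (Vᴴ * W) a b (k + 1)) (∏ i ∈ Iic k, lam i) := by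
  let z (p : ℝ) : Fin d → ℝ := eigsDesc (Zmat (conjDiagonal V a) (conjDiagonal W b) p)
  have hz0 (p : ℝ) (i : Fin d) : 0 ≤ z p i :=
    eigsDesc_nonneg (posSemidef_Zmat (posSemidef_conjDiagonal V ha)
      (posSemidef_conjDiagonal W hb) p) i
  have hzp0 (p : ℝ) (i : Fin d) : 0 ≤ z p i ^ p := Real.rpow_nonneg (hz0 p i) p
  have hprod (p : ℝ) : (∏ i ∈ Iic k, z p i) ^ p = ∏ i ∈ Iic k, z p i ^ p :=
    (Real.finsetProd_rpow _ _ (fun i _ => hz0 p i) p).symm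
  have htop {p : ℝ} (hp : 0 < p) : IsTopSet (fun i => z p i ^ p) (Iic k) :=
    .Iic (fun i j hij => Real.rpow_le_rpow (hz0 p j) (eigsDesc_antitone _ hij) hp.le) k
  have hmem : Iic k ∈ powersetCard (k + 1) (univ : Finset (Fin d)) :=
    mem_powersetCard_univ.2 (Fin.card_Iic k)
  have hne : ∃ w ∈ powersetCard (k + 1) (univ : Finset (Fin d)) ×ˢ powersetCard (k + 1) univ,
      gramMinor (Vᴴ * W) w.1 w.2 ≠ 0 := by
    have hU : Vᴴ * W ∈ unitaryGroup (Fin d) ℂ := mul_mem (Unitary.star_mem hV) hW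
    obtain ⟨J, hJ, hJ0⟩ := exists_gramMinor_ne_zero (mem_unitaryGroup_iff.1 hU) (Iic k)
    exact ⟨(Iic k, J), mem_product.2 ⟨hmem, mem_powersetCard_univ.2 (hJ.trans (Fin.card_Iic k))⟩,
      hJ0⟩
  have hgreatest := isGreatest_image_of_tendsto
    (x := fun w : Finset (Fin d) × Finset (Fin d) => (∏ i ∈ w.1, a i) * ∏ j ∈ w.2, b j)
    (fun w _ => mul_nonneg (prod_nonneg fun i _ => ha i) (prod_nonneg fun j _ => hb j))
    (fun w _ => gramMinor_nonneg _ _ _) hne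
    (Nat.cast_pos.2 (card_pos.2 ⟨_, hmem⟩))
    (.of_forall fun p => prod_nonneg fun i _ => hz0 p i)
    ((eventually_gt_atTop 0).mono fun p hp => ?_) ((eventually_gt_atTop 0).mono fun p hp => ?_)
    (tendsto_finsetProd (Iic k) fun i _ => hlam i)
  · simpa [nonzeroMinorProds, and_assoc] using hgreatest
  · rw [hprod, ← sum_prod_eigsDesc_Zmat_rpow hV hW ha hb hp]
    exact single_le_sum (f := fun S => ∏ i ∈ S, z p i ^ p)
      (fun S _ => prod_nonneg fun i _ => hzp0 p i) hmem
  · rw [hprod, ← sum_prod_eigsDesc_Zmat_rpow hV hW ha hb hp, ← nsmul_eq_mul]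
    exact sum_le_card_nsmul _ _ _ fun S hS => (htop hp).prod_le_prod (hzp0 p)
      ((mem_powersetCard_univ.1 hS).trans (Fin.card_Iic k).symm)

end Sequences

/-- The maximal case: the limiting eigenvalues of `Z_p = (A^{p/2} B^p A^{p/2})^{1/p}`
satisfy `λ_i = a_i b_i` for all `i` iff the minor condition holds for every `k = 1,…,d`,
iff the minor condition holds for every `k` which is a block boundary of `a` or of `b`
(i.e. `k ∈ {i_1,…,i_{l-1}, j_1,…,j_{m-1}}`). -/
theorem anti_lie_trotter_maximal_case_tfae
    {d : ℕ} (A B V W : Matrix (Fin d) (Fin d) ℂ) (a b : Fin d → ℝ)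
    (hA : A.PosSemidef) (hB : B.PosSemidef)
    (hV : V ∈ Matrix.unitaryGroup (Fin d) ℂ)
    (hW : W ∈ Matrix.unitaryGroup (Fin d) ℂ)
    (ha : Antitone a) (hb : Antitone b)
    (ha0 : ∀ i, 0 ≤ a i) (hb0 : ∀ i, 0 ≤ b i)
    (hAd : A = V * Matrix.diagonal (fun i => (a i : ℂ)) * Vᴴ)
    (hBd : B = W * Matrix.diagonal (fun i => (b i : ℂ)) * Wᴴ)
    (lam : Fin d → ℝ)
    (hlam : ∀ i, Tendsto (fun p : ℝ => eigsDesc (Zmat A B p) i) atTop (𝓝 (lam i))) :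
    ((∀ i, lam i = a i * b i) ↔ ∀ k : Fin d, BlockMinorCond (Vᴴ * W) a b k) ∧
    ((∀ i, lam i = a i * b i) ↔
      ∀ k : Fin d, ∀ h : (k : ℕ) + 1 < d,
        (a ⟨(k : ℕ) + 1, h⟩ < a k ∨ b ⟨(k : ℕ) + 1, h⟩ < b k) →
          BlockMinorCond (Vᴴ * W) a b k) := by
  subst hAd hBd
  have hU : Vᴴ * W ∈ unitaryGroup (Fin d) ℂ := mul_mem (Unitary.star_mem hV) hW
  have hlam_anti : Antitone lam := fun i j hij =>
    le_of_tendsto_of_tendsto' (hlam j) (hlam i) fun p => eigsDesc_antitone _ hij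
  have hlam0 (i : Fin d) : 0 ≤ lam i :=
    ge_of_tendsto' (hlam i) fun p => eigsDesc_nonneg (posSemidef_Zmat hA hB p) i
  have hmax := isGreatest_prod_Iic_of_tendsto hV hW ha0 hb0 hlam
  have hall (h : ∀ i, lam i = a i * b i) (k : Fin d) : HasTopMinor (Vᴴ * W) a b (k + 1) := by
    refine hasTopMinor_of_forall_prod_mul_prod_mem hU ha hb ha0 hb0 (fun l => ?_) k.isLt
    rw [← prod_mul_distrib, ← prod_congr rfl fun i _ => h i]
    exact (hmax l).1
  simp only [blockMinorCond_iff_hasTopMinor ha hb]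
  have hboundary := eq_mul_of_hasTopMinor_of_lt (mem_unitaryGroup_iff.1 hU) ha hb ha0 hb0
    hlam_anti hlam0 hmax
  exact ⟨⟨hall, fun h => congrFun (hboundary fun k _ _ => h k)⟩,
    ⟨fun h k _ _ => hall h k, fun h => congrFun (hboundary h)⟩⟩
end

section
/- For p > 0 let Z_p := (A_1^{p/2} A_2^{p/2} ⋯ A_{m-1}^{p/2} A_m^p A_{m-1}^{p/2} ⋯ A_2^{p/2} A_1^{p/2})^{1/p} and let λ_1(p) be its largest eigenvalue. Then λ_1 := lim_{p→∞} λ_1(p) exists and λ_1 = max{ a^{(1)}_{i_1} a^{(2)}_{i_2} ⋯ a^{(m)}_{i_m} : w(i_1, i_2, …, i_m) ≠ 0 }, where w(i_1,…,i_m) := Σ { w^{(1)}_{i_1 j_2} w^{(2)}_{j_2 j_3} ⋯ w^{(m-1)}_{j_{m-1} i_m} : 1 ≤ j_2,…,j_{m-1} ≤ d and a^{(2)}_{j_2} ⋯ a^{(m-1)}_{j_{m-1}} = a^{(2)}_{i_2} ⋯ a^{(m-1)}_{i_{m-1}} }. Moreover a^{(1)}_1 ⋯ a^{(m)}_1 ≥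 λ_1 ≥ a^{(1)}_d ⋯ a^{(m)}_d. -/
open Matrix Filter Topology Finset
open scoped ComplexOrder

/-- For `n + 1` matrices `A_0, …, A_n`, this is
`Z_p = (A_0^{p/2} A_1^{p/2} ⋯ A_{n-1}^{p/2} A_n^p A_{n-1}^{p/2} ⋯ A_1^{p/2} A_0^{p/2})^{1/p}`. -/
noncomputable def ZmatM {d n : ℕ} (A : Fin (n + 1) → Matrix (Fin d) (Fin d) ℂ)
    (p : ℝ) : Matrix (Fin d) (Fin d) ℂ :=
  psdPow ((List.ofFn fun l : Fin n => psdPow (A l.castSucc) (p / 2)).prod *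
    psdPow (A (Fin.last n)) p *
    ((List.ofFn fun l : Fin n => psdPow (A l.castSucc) (p / 2)).reverse).prod) (1 / p)

/-- The quantity `w(i_0, …, i_n)`: the sum of products
`w^{(0)}_{i_0 j_1} w^{(1)}_{j_1 j_2} ⋯ w^{(n-1)}_{j_{n-1} i_n}` (where
`w^{(l)} = V_l* V_{l+1}`) over all middle index tuples `j` whose product of
intermediate eigenvalues agrees with that of `i`. -/
noncomputable def wChain {d n : ℕ} (V : Fin (n + 1) → Matrix (Fin d) (Fin d) ℂ)
    (a : Fin (n + 1) → Fin d → ℝ) (i : Fin (n + 1) → Fin d) : ℂ :=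
  ∑ j : Fin (n + 1) → Fin d,
    Set.indicator
      {j : Fin (n + 1) → Fin d |
        j 0 = i 0 ∧ j (Fin.last n) = i (Fin.last n) ∧
        (∏ l ∈ Finset.univ.filter (fun l : Fin (n + 1) => l ≠ 0 ∧ l ≠ Fin.last n),
            a l (j l)) =
          ∏ l ∈ Finset.univ.filter (fun l : Fin (n + 1) => l ≠ 0 ∧ l ≠ Fin.last n),
            a l (i l)}
      (fun j => ∏ l : Fin n, ((V l.castSucc)ᴴ * V l.succ) (j l.castSucc) (j l.succ)) j

/-!
By the C*-identity, `λ_1(p) = ‖A_0^{p/2} A_1^{p/2} ⋯ A_n^{p/2}‖^{2/p}` in the operator norm.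
Diagonalizing each factor, the product becomes, up to unitaries on both sides, a sum over index
paths `j = (j_0, …, j_n)` of `(a^{(0)}_{j_0} ⋯ a^{(n)}_{j_n})^{p/2} E_j`, where `E_j` carries the
product of the transition coefficients along `j` at the entry `(j_0, j_n)`. This is an exponential
sum with matrix coefficients, so the `2/p`-th power of its norm tends to the largest base `t` at
which `∑ E_j`, over the paths with eigenvalue product `t`, does not vanish; for `t ≠ 0` the entries
of that coefficient at the endpoints of such paths `i` are exactly the numbers `w(i)`. The total
`∑ E_j` is unitary, so some `w(i)` is nonzero.
-/

section FunctionalCalculus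

variable {ι : Type*}

/- On the finite spectrum of `φ y` the function `f` is a polynomial, and `φ` commutes with
polynomials. -/
lemma cfc_algHom_pi {B : Type*} [Finite ι] [Ring B] [StarRing B] [TopologicalSpace B]
    [Algebra ℝ B] [ContinuousFunctionalCalculus ℝ B IsSelfAdjoint]
    (φ : (ι → ℝ) →ₐ[ℝ] B) {y : ι → ℝ} (hφy : IsSelfAdjoint (φ y)) (f : ℝ → ℝ) :
    cfc f (φ y) = φ (f ∘ y) := by
  classical
  have := Fintype.ofFinite ι
  obtain ⟨q, hq⟩ : ∃ q : Polynomial ℝ, ∀ i, q.eval (y i) = f (y i) :=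
    ⟨Lagrange.interpolate (univ.image y) id f, fun i =>
      Lagrange.eval_interpolate_at_node f Function.injective_id.injOn
        (mem_image_of_mem y (mem_univ i))⟩
  have hspec : (spectrum ℝ (φ y)).EqOn f q.eval := by
    intro x hx
    obtain ⟨i, rfl⟩ : ∃ i, x = y i := by
      simpa [Pi.spectrum_eq, spectrum.mem_iff, sub_eq_zero] using
        AlgHom.spectrum_apply_subset φ y hx
    exact (hq i).symm
  calc cfc f (φ y) = Polynomial.aeval (φ y) q := by rw [cfc_congr hspec, cfc_polynomial q _ hφy]
    _ = φ (Polynomial.aeval y q) := Polynomial.aeval_algHom_apply φ y q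
    _ = φ (f ∘ y) := congrArg φ (by ext i; simp [hq])

lemma cfc_unitary_conj_diagonal {𝕜 : Type*} [Fintype ι] [DecidableEq ι] [RCLike 𝕜]
    {U : Matrix ι ι 𝕜} (hU : U ∈ unitaryGroup ι 𝕜) (f : ℝ → ℝ) (y : ι → ℝ) :
    cfc f (U * diagonal (fun i => (y i : 𝕜)) * Uᴴ)
      = U * diagonal (fun i => (f (y i) : 𝕜)) * Uᴴ := by
  let conj : Matrix ι ι 𝕜 →ₐ[𝕜] Matrix ι ι 𝕜 := Unitary.conjStarAlgAut 𝕜 _ ⟨U, hU⟩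
  let φ : (ι → ℝ) →ₐ[ℝ] Matrix ι ι 𝕜 :=
    (conj.restrictScalars ℝ).comp ((diagonalAlgHom ℝ).comp (RCLike.ofRealAm.compLeft ι))
  have hdiag : (diagonal fun i => (y i : 𝕜)).IsHermitian :=
    isHermitian_diagonal_of_self_adjoint _ (funext fun i => RCLike.conj_ofReal (y i))
  exact cfc_algHom_pi φ (isHermitian_mul_mul_conjTranspose U hdiag) f

end FunctionalCalculus

section PsdPow

open scoped MatrixOrder

variable {d : ℕ}

lemma psdPow_eq_cfc (A : Matrix (Fin d) (Fin d) ℂ) (r : ℝ) :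
    psdPow A r = cfc (fun x : ℝ => x ^ r) A := by
  unfold psdPow
  split_ifs with hA
  · rw [hA.cfc_eq]
    rfl
  · exact (cfc_apply_of_not_predicate A hA).symm

lemma isHermitian_psdPow (A : Matrix (Fin d) (Fin d) ℂ) (r : ℝ) : (psdPow A r).IsHermitian :=
  psdPow_eq_cfc A r ▸ cfc_predicate _ A

lemma psdPow_unitary_conj_diagonal {U : Matrix (Fin d) (Fin d) ℂ}
    (hU : U ∈ unitaryGroup (Fin d) ℂ) (y : Fin d → ℝ) (r : ℝ) :
    psdPow (U * diagonal (fun i => (y i : ℂ)) * Uᴴ) r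
      = U * diagonal (fun i => ((y i ^ r : ℝ) : ℂ)) * Uᴴ := by
  rw [psdPow_eq_cfc]
  exact cfc_unitary_conj_diagonal hU (· ^ r) y

lemma psdPow_half_mul_self {A : Matrix (Fin d) (Fin d) ℂ} (hA : A.PosSemidef) {r : ℝ} (hr : 0 ≤ r) :
    psdPow A (r / 2) * psdPow A (r / 2) = psdPow A r := by
  simp only [psdPow_eq_cfc]
  have hcont : Continuous fun x : ℝ => x ^ (r / 2) := Real.continuous_rpow_const (by positivity)
  rw [← cfc_mul _ _ A hcont.continuousOn hcont.continuousOn]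
  refine cfc_congr fun x hx => ?_
  have hx0 : 0 ≤ x := spectrum_nonneg_of_nonneg hA.nonneg hx
  rw [← Real.rpow_add_of_nonneg hx0 (by positivity) (by positivity), add_halves]

end PsdPow

section TopEigenvalue

open scoped MatrixOrder Matrix.Norms.L2Operator

variable {d : ℕ} {A : Matrix (Fin d) (Fin d) ℂ}

lemma isGreatest_spectrum_eigsDesc_zero (hd : 0 < d) (hA : A.IsHermitian) :
    IsGreatest (spectrum ℝ A) (eigsDesc A ⟨0, hd⟩) := by
  rw [hA.spectrum_real_eq_range_eigenvalues, eigsDesc, dif_pos hA]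
  refine ⟨Set.mem_range_self _, ?_⟩
  rintro _ ⟨i, rfl⟩
  have hle : (Tuple.sort hA.eigenvalues).symm i ≤ Fin.rev ⟨0, hd⟩ := by
    rw [Fin.le_def, Fin.val_rev]
    lia
  simpa using Tuple.monotone_sort hA.eigenvalues hle

lemma eigsDesc_psdPow_zero (hd : 0 < d) (hA : A.PosSemidef) {r : ℝ} (hr : 0 ≤ r) :
    eigsDesc (psdPow A r) ⟨0, hd⟩ = eigsDesc A ⟨0, hd⟩ ^ r := by
  have hmono : MonotoneOn (· ^ r) (spectrum ℝ A) := fun x hx y _ hxy =>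
    Real.rpow_le_rpow (spectrum_nonneg_of_nonneg hA.nonneg hx) hxy hr
  have hspec : spectrum ℝ (psdPow A r) = (· ^ r) '' spectrum ℝ A := by
    rw [psdPow_eq_cfc]
    exact cfc_map_spectrum _ A hA.isHermitian (Real.continuous_rpow_const hr).continuousOn
  have htop := hmono.map_isGreatest (isGreatest_spectrum_eigsDesc_zero hd hA.isHermitian)
  exact (isGreatest_spectrum_eigsDesc_zero hd (isHermitian_psdPow A r)).unique (hspec ▸ htop)

lemma eigsDesc_zero_eq_norm (hd : 0 < d) (hA : A.PosSemidef) : eigsDesc A ⟨0, hd⟩ = ‖A‖ := by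
  have : Nonempty (Fin d) := ⟨⟨0, hd⟩⟩
  have hnorm : IsGreatest (spectrum ℝ A) ‖A‖ :=
    ⟨CStarAlgebra.norm_mem_spectrum_of_nonneg hA.nonneg,
      fun x hx => (le_abs_self x).trans (spectrum.norm_le_norm_of_mem hx)⟩
  exact (isGreatest_spectrum_eigsDesc_zero hd hA.isHermitian).unique hnorm

end TopEigenvalue

section HalfProduct

open scoped Matrix.Norms.L2Operator

variable {d n : ℕ} {A : Fin (n + 1) → Matrix (Fin d) (Fin d) ℂ}

/-- The product `A_0^s A_1^s ⋯ A_n^s`; for `s = p / 2` it is half of the palindrome `Z_p^p`. -/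
noncomputable def powProd (A : Fin (n + 1) → Matrix (Fin d) (Fin d) ℂ) (s : ℝ) :
    Matrix (Fin d) (Fin d) ℂ :=
  (List.ofFn fun l => psdPow (A l) s).prod

lemma ZmatM_eq_psdPow_mul_conjTranspose (hA : (A (Fin.last n)).PosSemidef) {p : ℝ}
    (hp : 0 ≤ p) :
    ZmatM A p = psdPow (powProd A (p / 2) * (powProd A (p / 2))ᴴ) (1 / p) := by
  set P := (List.ofFn fun l : Fin n => psdPow (A l.castSucc) (p / 2)).prod with hP
  have hrev : (List.ofFn fun l : Fin n => psdPow (A l.castSucc) (p / 2)).reverse.prod = Pᴴ := by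
    simp only [hP, conjTranspose_list_prod, List.map_ofFn, Function.comp_def,
      (isHermitian_psdPow _ _).eq]
  have hsplit : powProd A (p / 2) = P * psdPow (A (Fin.last n)) (p / 2) := by
    rw [powProd, List.ofFn_succ', List.concat_eq_append, List.prod_append, List.prod_singleton]
  rw [ZmatM, hrev, hsplit, ← psdPow_half_mul_self hA hp, conjTranspose_mul,
    (isHermitian_psdPow _ _).eq]
  simp only [Matrix.mul_assoc]
  rfl

lemma eigsDesc_ZmatM_zero (hd : 0 < d) (hA : (A (Fin.last n)).PosSemidef) {p : ℝ}
    (hp : 0 < p) :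
    eigsDesc (ZmatM A p) ⟨0, hd⟩ = ‖powProd A (p / 2)‖ ^ (p / 2)⁻¹ := by
  have hpsd := posSemidef_self_mul_conjTranspose (powProd A (p / 2))
  rw [ZmatM_eq_psdPow_mul_conjTranspose hA hp.le, eigsDesc_psdPow_zero hd hpsd (by positivity),
    eigsDesc_zero_eq_norm hd hpsd, ← star_eq_conjTranspose, CStarRing.norm_self_mul_star, ← sq,
    ← Real.rpow_natCast_mul (norm_nonneg _)]
  congr 1
  push_cast
  field_simp

end HalfProduct

section Paths

variable {ι R : Type*} [CommSemiring R] {n : ℕ}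

/-- The weight `W_0(j_0, j_1) W_1(j_1, j_2) ⋯ W_{n-1}(j_{n-1}, j_n)` of the index path `j`. -/
def pathWeight (W : Fin n → Matrix ι ι R) (j : Fin (n + 1) → ι) : R :=
  ∏ l, W l (j l.castSucc) (j l.succ)

lemma pathWeight_cons (W : Fin (n + 1) → Matrix ι ι R) (i : ι) (j : Fin (n + 1) → ι) :
    pathWeight W (Fin.cons i j : Fin (n + 2) → ι)
      = W 0 i (j 0) * pathWeight (fun l => W l.succ) j := by
  simp [pathWeight, Fin.prod_univ_succ (n := n)]

variable [DecidableEq ι]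

/-- The contribution of the index path `j` to the product `W_0 W_1 ⋯ W_{n-1}`: its weight, placed
at the entry given by the endpoints of `j`. -/
def pathMatrix (W : Fin n → Matrix ι ι R) (j : Fin (n + 1) → ι) : Matrix ι ι R :=
  Matrix.single (j 0) (j (Fin.last n)) (pathWeight W j)

lemma exists_sum_pathMatrix_apply_ne_zero {W : Fin n → Matrix ι ι R}
    {s : Finset (Fin (n + 1) → ι)} (h : ∑ j ∈ s, pathMatrix W j ≠ 0) :
    ∃ i ∈ s, (∑ j ∈ s, pathMatrix W j) (i 0) (i (Fin.last n)) ≠ 0 := by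
  obtain ⟨x, y, hxy⟩ : ∃ x y, (∑ j ∈ s, pathMatrix W j) x y ≠ 0 := by
    by_contra! hzero
    exact h (Matrix.ext hzero)
  have hsum := hxy
  rw [Matrix.sum_apply] at hsum
  obtain ⟨i, hi, hpath⟩ := exists_ne_zero_of_sum_ne_zero hsum
  obtain ⟨rfl, rfl⟩ : i 0 = x ∧ i (Fin.last n) = y := by
    by_contra hne
    exact hpath (single_apply_of_ne _ _ _ _ _ hne)
  exact ⟨i, hi, hxy⟩

lemma diagonal_mul_sum_smul_pathMatrix [Fintype ι] (W : Fin (n + 1) → Matrix ι ι R)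
    (D : Fin (n + 2) → ι → R) :
    diagonal (D 0) * W 0 *
        ∑ j : Fin (n + 1) → ι, (∏ l, D l.succ (j l)) • pathMatrix (fun l => W l.succ) j
      = ∑ j, (∏ l, D l (j l)) • pathMatrix W j := by
  rw [← (Fin.consEquiv fun _ : Fin (n + 2) => ι).sum_comp, Fintype.sum_prod_type,
    ← sum_single_eq_diagonal, sum_mul, sum_mul]
  refine sum_congr rfl fun i _ => ?_
  rw [mul_sum]
  refine sum_congr rfl fun j _ => ?_
  have hweight : pathWeight W (Fin.consEquiv (fun _ => ι) (i, j))
      = W 0 i (j 0) * pathWeight (fun l => W l.succ) j := pathWeight_cons W i j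
  simp only [pathMatrix, hweight, smul_single, smul_eq_mul, single_mul_mul_single,
    Fin.consEquiv_apply, Fin.cons_zero, ← Fin.succ_last, Fin.cons_succ,
    Fin.prod_univ_succ (n := n + 1)]
  congr 1
  ring

lemma prod_ofFn_mul_diagonal_mul [Fintype ι] (V U : Fin (n + 1) → Matrix ι ι R)
    (D : Fin (n + 1) → ι → R) :
    (List.ofFn fun l => V l * diagonal (D l) * U l).prod
      = V 0 * (∑ j, (∏ l, D l (j l)) • pathMatrix (fun l => U l.castSucc * V l.succ) j) *
          U (Fin.last n) := by
  induction n with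
  | zero =>
    have hdiag : ∑ j : Fin 1 → ι, (∏ l, D l (j l)) •
        pathMatrix (fun l : Fin 0 => U l.castSucc * V l.succ) j = diagonal (D 0) := by
      rw [← (Equiv.funUnique (Fin 1) ι).symm.sum_comp, ← sum_single_eq_diagonal]
      simp [pathMatrix, pathWeight]
    rw [hdiag, List.ofFn_succ, List.ofFn_zero, List.prod_singleton]
    rfl
  | succ n ih =>
    rw [List.ofFn_succ, List.prod_cons, ih, ← diagonal_mul_sum_smul_pathMatrix]
    simp only [Matrix.mul_assoc, Fin.succ_last, Fin.castSucc_zero, Fin.succ_castSucc]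

end Paths

section ExponentialSums

lemma tendsto_rpow_inv_of_tendsto_div_rpow {g : ℝ → ℝ} {M L : ℝ} (hg : ∀ s, 0 ≤ g s)
    (hM : 0 < M) (hL : L ≠ 0) (h : Tendsto (fun s => g s / M ^ s) atTop (𝓝 L)) :
    Tendsto (fun s => g s ^ s⁻¹) atTop (𝓝 M) := by
  have hlim : Tendsto (fun s => M * (g s / M ^ s) ^ s⁻¹) atTop (𝓝 M) := by
    simpa using (h.rpow tendsto_inv_atTop_zero (Or.inl hL)).const_mul M
  refine hlim.congr' ?_
  filter_upwards [eventually_gt_atTop 0] with s hs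
  rw [Real.div_rpow (hg s) (by positivity), Real.rpow_rpow_inv hM.le hs.ne',
    mul_div_cancel₀ _ hM.ne']

lemma sum_smul_eq_sum_filter_le {J X R E : Type*} [Fintype J] [LinearOrder X] [Semiring R]
    [AddCommMonoid E] [Module R E] {t : J → X} {e : J → E} {M : X}
    (hgt : ∀ x > M, ∑ j with t j = x, e j = 0) (g : X → R) :
    ∑ j, g (t j) • e j = ∑ j with t j ≤ M, g (t j) • e j := by
  have hfiber : ∀ x ∈ univ.image t,
      ∑ j ∈ univ.filter (¬ t · ≤ M) with t j = x, g (t j) • e j = 0 := by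
    intro x _
    rcases le_or_gt x M with hx | hx
    · refine sum_eq_zero fun j hj => ?_
      simp only [mem_filter] at hj
      exact absurd (hj.2 ▸ hx) hj.1.2
    · calc ∑ j ∈ univ.filter (¬ t · ≤ M) with t j = x, g (t j) • e j
          = ∑ j with t j = x, g x • e j := by
            rw [filter_filter]
            refine sum_congr (filter_congr fun j _ => ?_) fun j hj => ?_
            · exact ⟨And.right, fun h => ⟨by rw [h]; exact hx.not_ge, h⟩⟩
            · rw [(mem_filter.1 hj).2]
        _ = 0 := by rw [← smul_sum, hgt x hx, smul_zero]
  have hbig : ∑ j with ¬ t j ≤ M, g (t j) • e j = 0 := by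
    rw [← sum_fiberwise_of_maps_to (t := univ.image t)
      (fun j _ => mem_image_of_mem t (mem_univ j))]
    exact sum_eq_zero hfiber
  rw [← sum_filter_add_sum_filter_not univ (t · ≤ M), hbig, add_zero]

variable {J E : Type*} [Fintype J] [NormedAddCommGroup E] [NormedSpace ℝ E]
  {t : J → ℝ} {e : J → E} {M : ℝ}

lemma tendsto_sum_filter_div_rpow_smul (ht : ∀ j, 0 ≤ t j) (hM : 0 < M) :
    Tendsto (fun s : ℝ => ∑ j with t j ≤ M, (t j / M) ^ s • e j) atTop
      (𝓝 (∑ j with t j = M, e j)) := by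
  have hlim : ∑ j with t j = M, e j = ∑ j with t j ≤ M, if t j = M then e j else 0 := by
    rw [← sum_filter, filter_filter]
    exact sum_congr (filter_congr fun j _ => ⟨fun h => ⟨h.le, h⟩, And.right⟩) fun _ _ => rfl
  rw [hlim]
  refine tendsto_finsetSum _ fun j hj => ?_
  split_ifs with hjM
  · simp [hjM, div_self hM.ne']
  · have hlt : t j / M < 1 := (div_lt_one hM).2 ((mem_filter.1 hj).2.lt_of_ne hjM)
    have hgt : -1 < t j / M := neg_one_lt_zero.trans_le (div_nonneg (ht j) hM.le)
    simpa using (tendsto_rpow_atTop_of_base_lt_one _ hgt hlt).smul_const (e j)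

theorem tendsto_norm_sum_rpow_smul_rpow_inv (ht : ∀ j, 0 ≤ t j) (hM : 0 ≤ M)
    (hne : M ≠ 0 → ∑ j with t j = M, e j ≠ 0) (hgt : ∀ x > M, ∑ j with t j = x, e j = 0) :
    Tendsto (fun s : ℝ => ‖∑ j, t j ^ s • e j‖ ^ s⁻¹) atTop (𝓝 M) := by
  have hsum (s : ℝ) : ∑ j, t j ^ s • e j = ∑ j with t j ≤ M, t j ^ s • e j :=
    sum_smul_eq_sum_filter_le hgt (· ^ s)
  simp only [hsum]
  rcases hM.eq_or_lt with rfl | hM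
  · refine tendsto_const_nhds.congr' ?_
    filter_upwards [eventually_gt_atTop 0] with s hs
    rw [sum_eq_zero, norm_zero, Real.zero_rpow (inv_ne_zero hs.ne')]
    intro j hj
    rw [(mem_filter.1 hj).2.antisymm (ht j), Real.zero_rpow hs.ne', zero_smul]
  · refine tendsto_rpow_inv_of_tendsto_div_rpow (fun _ => norm_nonneg _) hM
      (norm_ne_zero_iff.2 (hne hM.ne')) ?_
    refine (tendsto_sum_filter_div_rpow_smul ht hM).norm.congr fun s => ?_
    have hMs : 0 ≤ (M ^ s)⁻¹ := by positivity
    simp only [Real.div_rpow (ht _) hM.le]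
    simp only [div_eq_inv_mul, ← norm_smul_of_nonneg hMs, smul_sum, smul_smul]

end ExponentialSums

section Transitions

variable {ι R : Type*} [Fintype ι] [CommRing R] [StarRing R] {n : ℕ}

/-- The transition matrices `W_l = V_l* V_{l+1}` between consecutive eigenbases. -/
def transitionMatrix (V : Fin (n + 1) → Matrix ι ι R) (l : Fin n) : Matrix ι ι R :=
  (V l.castSucc)ᴴ * V l.succ

lemma sum_pathMatrix_transitionMatrix_ne_zero [DecidableEq ι] [Nonempty ι] [Nontrivial R]
    {V : Fin (n + 1) → Matrix ι ι R} (hV : ∀ l, V l ∈ unitaryGroup ι R) :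
    ∑ j, pathMatrix (transitionMatrix V) j ≠ 0 := by
  intro hzero
  have hVV (l) : V l * (V l)ᴴ = 1 := mem_unitaryGroup_iff.1 (hV l)
  have hprod := prod_ofFn_mul_diagonal_mul V (fun l => (V l)ᴴ) fun _ _ => 1
  change _ = V 0 * (∑ j, _ • pathMatrix (transitionMatrix V) j) * _ at hprod
  simp [hVV, hzero] at hprod

end Transitions

section MiddleProducts

variable {ι R : Type*} {n : ℕ}

/-- The product of the numbers `a_l (j_l)` met by the index path `j` away from its endpoints; the
condition on the index tuples in `w(i)` is `midProd a j = midProd a i`. -/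
def midProd [CommMonoid R] (a : Fin (n + 1) → ι → R) (j : Fin (n + 1) → ι) : R :=
  ∏ l with l ≠ 0 ∧ l ≠ Fin.last n, a l (j l)

lemma prod_eq_prod_iff_midProd_eq [CommMonoidWithZero R] [IsCancelMulZero R]
    {a : Fin (n + 1) → ι → R} {i j : Fin (n + 1) → ι} (h0 : j 0 = i 0)
    (hlast : j (Fin.last n) = i (Fin.last n)) (hi : ∏ l, a l (i l) ≠ 0) :
    ∏ l, a l (j l) = ∏ l, a l (i l) ↔ midProd a j = midProd a i := by
  have hsplit (k : Fin (n + 1) → ι) :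
      ∏ l, a l (k l) = midProd a k * ∏ l with ¬ (l ≠ 0 ∧ l ≠ Fin.last n), a l (k l) :=
    (prod_filter_mul_prod_filter_not _ _ _).symm
  have hends : ∏ l with ¬ (l ≠ 0 ∧ l ≠ Fin.last n), a l (j l)
      = ∏ l with ¬ (l ≠ 0 ∧ l ≠ Fin.last n), a l (i l) := by
    refine prod_congr rfl fun l hl => ?_
    obtain rfl | rfl : l = 0 ∨ l = Fin.last n := by simpa [or_iff_not_imp_left] using hl
    · rw [h0]
    · rw [hlast]
  rw [hsplit] at hi
  rw [hsplit, hsplit, hends, mul_left_inj' (right_ne_zero_of_mul hi)]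

end MiddleProducts

section PathCoefficients

variable {d n : ℕ} {V : Fin (n + 1) → Matrix (Fin d) (Fin d) ℂ} {a : Fin (n + 1) → Fin d → ℝ}

lemma wChain_eq_sum_pathMatrix_apply (V : Fin (n + 1) → Matrix (Fin d) (Fin d) ℂ)
    (a : Fin (n + 1) → Fin d → ℝ) (i : Fin (n + 1) → Fin d) :
    wChain V a i
      = (∑ j with midProd a j = midProd a i, pathMatrix (transitionMatrix V) j) (i 0)
          (i (Fin.last n)) := by
  classical
  rw [Matrix.sum_apply, sum_filter]
  refine sum_congr rfl fun j _ => ?_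
  simp only [Set.indicator_apply, Set.mem_ofPred_eq, pathMatrix, Matrix.single_apply, ← ite_and]
  exact if_congr (by tauto) rfl rfl

lemma wChain_eq_sum_pathMatrix_apply_of_ne_zero {i : Fin (n + 1) → Fin d}
    (hi : ∏ l, a l (i l) ≠ 0) :
    wChain V a i
      = (∑ j with ∏ l, a l (j l) = ∏ l, a l (i l), pathMatrix (transitionMatrix V) j) (i 0)
          (i (Fin.last n)) := by
  rw [wChain_eq_sum_pathMatrix_apply, Matrix.sum_apply, Matrix.sum_apply, sum_filter, sum_filter]
  refine sum_congr rfl fun j _ => ?_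
  by_cases hj : j 0 = i 0 ∧ j (Fin.last n) = i (Fin.last n)
  · simp only [prod_eq_prod_iff_midProd_eq hj.1 hj.2 hi]
  · simp [pathMatrix, single_apply_of_ne _ _ _ _ _ hj]

lemma exists_wChain_ne_zero (hd : 0 < d) (hV : ∀ l, V l ∈ unitaryGroup (Fin d) ℂ)
    (a : Fin (n + 1) → Fin d → ℝ) : ∃ i, wChain V a i ≠ 0 := by
  have : Nonempty (Fin d) := ⟨⟨0, hd⟩⟩
  have hsum := sum_pathMatrix_transitionMatrix_ne_zero hV
  rw [← sum_fiberwise_of_maps_to (t := univ.image (midProd a))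
    fun j _ => mem_image_of_mem _ (mem_univ j)] at hsum
  obtain ⟨x, -, hx⟩ := exists_ne_zero_of_sum_ne_zero hsum
  obtain ⟨i, hi, hentry⟩ := exists_sum_pathMatrix_apply_ne_zero hx
  obtain rfl := (mem_filter.1 hi).2
  exact ⟨i, wChain_eq_sum_pathMatrix_apply V a i ▸ hentry⟩

lemma exists_isGreatest_wChain_ne_zero (hd : 0 < d) (hV : ∀ l, V l ∈ unitaryGroup (Fin d) ℂ)
    (a : Fin (n + 1) → Fin d → ℝ) :
    ∃ M, IsGreatest {x : ℝ | ∃ i, wChain V a i ≠ 0 ∧ x = ∏ l, a l (i l)} M := by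
  have hfin : {x : ℝ | ∃ i, wChain V a i ≠ 0 ∧ x = ∏ l, a l (i l)}.Finite :=
    (Set.finite_range fun i : Fin (n + 1) → Fin d => ∏ l, a l (i l)).subset
      fun _ ⟨i, _, hx⟩ => ⟨i, hx.symm⟩
  obtain ⟨i, hi⟩ := exists_wChain_ne_zero hd hV a
  exact hfin.isCompact.exists_isGreatest ⟨_, i, hi, rfl⟩

end PathCoefficients

section Limit

open scoped Matrix.Norms.L2Operator

variable {d n : ℕ} {A V : Fin (n + 1) → Matrix (Fin d) (Fin d) ℂ} {a : Fin (n + 1) → Fin d → ℝ}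

lemma norm_powProd (hV : ∀ l, V l ∈ unitaryGroup (Fin d) ℂ) (ha0 : ∀ l i, 0 ≤ a l i)
    (hAd : ∀ l, A l = V l * diagonal (fun i => (a l i : ℂ)) * (V l)ᴴ) (s : ℝ) :
    ‖powProd A s‖ = ‖∑ j, (∏ l, a l (j l)) ^ s • pathMatrix (transitionMatrix V) j‖ := by
  have hcoeff (j : Fin (n + 1) → Fin d) :
      ∏ l, ((a l (j l) ^ s : ℝ) : ℂ) = ((∏ l, a l (j l)) ^ s : ℝ) := by
    rw [← Complex.ofReal_prod, Real.finsetProd_rpow _ _ fun l _ => ha0 l (j l)]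
  have hpow (l) : psdPow (A l) s = V l * diagonal (fun i => ((a l i ^ s : ℝ) : ℂ)) * (V l)ᴴ := by
    rw [hAd, psdPow_unitary_conj_diagonal (hV l)]
  have hlast : (V (Fin.last n))ᴴ ∈ unitary (Matrix (Fin d) (Fin d) ℂ) :=
    Unitary.star_mem (hV (Fin.last n))
  simp only [powProd, hpow]
  rw [prod_ofFn_mul_diagonal_mul V (fun l => (V l)ᴴ), CStarRing.norm_mul_mem_unitary _ hlast,
    CStarRing.norm_mem_unitary_mul _ (hV 0)]
  simp only [hcoeff, Complex.coe_smul]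
  rfl

lemma tendsto_norm_powProd_rpow_inv (hV : ∀ l, V l ∈ unitaryGroup (Fin d) ℂ)
    (ha0 : ∀ l i, 0 ≤ a l i)
    (hAd : ∀ l, A l = V l * diagonal (fun i => (a l i : ℂ)) * (V l)ᴴ) {M : ℝ}
    (hM : IsGreatest {x : ℝ | ∃ i, wChain V a i ≠ 0 ∧ x = ∏ l, a l (i l)} M) :
    Tendsto (fun s => ‖powProd A s‖ ^ s⁻¹) atTop (𝓝 M) := by
  have hprod (j : Fin (n + 1) → Fin d) : 0 ≤ ∏ l, a l (j l) := prod_nonneg fun l _ => ha0 l (j l)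
  obtain ⟨⟨i, hi, rfl⟩, hmax⟩ := hM
  simp only [norm_powProd hV ha0 hAd]
  refine tendsto_norm_sum_rpow_smul_rpow_inv hprod (hprod i) (fun hne hzero => hi ?_)
    fun x hx => ?_
  · rw [wChain_eq_sum_pathMatrix_apply_of_ne_zero hne, hzero, Matrix.zero_apply]
  · by_contra hsum
    obtain ⟨k, hk, hentry⟩ := exists_sum_pathMatrix_apply_ne_zero hsum
    obtain rfl := (mem_filter.1 hk).2
    rw [← wChain_eq_sum_pathMatrix_apply_of_ne_zero ((hprod i).trans_lt hx).ne'] at hentry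
    exact (hmax ⟨k, hentry, rfl⟩).not_gt hx

lemma tendsto_eigsDesc_ZmatM_zero (hd : 0 < d) (hA : (A (Fin.last n)).PosSemidef)
    (hV : ∀ l, V l ∈ unitaryGroup (Fin d) ℂ) (ha0 : ∀ l i, 0 ≤ a l i)
    (hAd : ∀ l, A l = V l * diagonal (fun i => (a l i : ℂ)) * (V l)ᴴ) {M : ℝ}
    (hM : IsGreatest {x : ℝ | ∃ i, wChain V a i ≠ 0 ∧ x = ∏ l, a l (i l)} M) :
    Tendsto (fun p => eigsDesc (ZmatM A p) ⟨0, hd⟩) atTop (𝓝 M) := by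
  have hhalf : Tendsto (fun p : ℝ => p / 2) atTop atTop := tendsto_id.atTop_div_const two_pos
  refine ((tendsto_norm_powProd_rpow_inv hV ha0 hAd hM).comp hhalf).congr' ?_
  filter_upwards [eventually_gt_atTop 0] with p hp
  exact (eigsDesc_ZmatM_zero hd hA hp).symm

end Limit

/-- For `n + 1` positive semidefinite matrices, the largest eigenvalue `λ_1(p)` of
`Z_p = (A_0^{p/2} ⋯ A_{n-1}^{p/2} A_n^p A_{n-1}^{p/2} ⋯ A_0^{p/2})^{1/p}` converges as
`p → ∞`; the limit is `max{ a^{(0)}_{i_0} ⋯ a^{(n)}_{i_n} : w(i_0,…,i_n) ≠ 0 }` and lies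
between `a^{(0)}_d ⋯ a^{(n)}_d` and `a^{(0)}_1 ⋯ a^{(n)}_1`. -/
theorem anti_lie_trotter_multi_top_eigenvalue
    {d n : ℕ} (hd : 0 < d)
    (A V : Fin (n + 1) → Matrix (Fin d) (Fin d) ℂ)
    (a : Fin (n + 1) → Fin d → ℝ)
    (hA : ∀ l, (A l).PosSemidef)
    (hV : ∀ l, V l ∈ Matrix.unitaryGroup (Fin d) ℂ)
    (ha : ∀ l, Antitone (a l)) (ha0 : ∀ l i, 0 ≤ a l i)
    (hAd : ∀ l, A l = V l * Matrix.diagonal (fun i => (a l i : ℂ)) * (V l)ᴴ) :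
    ∃ lam1 : ℝ,
      Tendsto (fun p : ℝ => eigsDesc (ZmatM A p) ⟨0, hd⟩) atTop (𝓝 lam1) ∧
      IsGreatest
        {x : ℝ | ∃ i : Fin (n + 1) → Fin d, wChain V a i ≠ 0 ∧ x = ∏ l, a l (i l)}
        lam1 ∧
      lam1 ≤ ∏ l, a l ⟨0, hd⟩ ∧
      (∏ l, a l ⟨d - 1, Nat.sub_lt hd one_pos⟩) ≤ lam1 := by
  obtain ⟨M, hM⟩ := exists_isGreatest_wChain_ne_zero hd hV a
  refine ⟨M, tendsto_eigsDesc_ZmatM_zero hd (hA (Fin.last n)) hV ha0 hAd hM, hM, ?_⟩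
  obtain ⟨i, -, rfl⟩ := hM.1
  exact ⟨prod_le_prod (fun l _ => ha0 l _) fun l _ => ha l (Fin.le_def.2 (Nat.zero_le _)),
    prod_le_prod (fun l _ => ha0 l _) fun l _ => ha l (Fin.le_def.2 (Nat.le_sub_one_of_lt (i l).2))⟩
end
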